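/- arXiv:1809.07745 — 2 statements merged into one kernel-verified Lean document; each statement's English description precedes it below -/
import Mathlib

section
/- Let E be a real normed space, let k ≥ 0, let δ : (0,∞) → (0,∞) be a function with iterates δ_m, and let S, T be subsets of E with ∅ ≠ S ⊆ T such that S ↪_k T and O_{δ(ε)}(y) ∩ S ↪_i O_ε(y) ∩ S for every y ∈ E, every ε > 0 and every 0 ≤ i < k. Then O_{δ_k(ε)}(S) ↪_k O_ε(T) for every ε > 0. -/
open Metric Set

/-- `S ↪ₖ B`: every continuous map of the `k`-sphere (unit sphere of `ℝ^{k+1}`) into `S`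
extends to a continuous map of the closed unit `(k+1)`-ball into `B`. -/
def EmbedK {Y : Type*} [TopologicalSpace Y] (k : ℕ) (S B : Set Y) : Prop :=
  ∀ g : sphere (0 : EuclideanSpace ℝ (Fin (k + 1))) 1 → Y,
    Continuous g → (∀ p, g p ∈ S) →
      ∃ h : closedBall (0 : EuclideanSpace ℝ (Fin (k + 1))) 1 → Y,
        Continuous h ∧ (∀ p, h p ∈ B) ∧
          ∀ p : sphere (0 : EuclideanSpace ℝ (Fin (k + 1))) 1,
            h ⟨p.1, sphere_subset_closedBall p.2⟩ = g p

/-- Lower semi-continuity of a set-valued mapping. -/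
def LSC {X Y : Type*} [TopologicalSpace X] [TopologicalSpace Y] (Φ : X → Set Y) : Prop :=
  ∀ U : Set Y, IsOpen U → IsOpen {x | (Φ x ∩ U).Nonempty}

/-- Lower locally constant set-valued mapping. -/
def LowerLocallyConstant {X Y : Type*} [TopologicalSpace X] [TopologicalSpace Y]
    (φ : X → Set Y) : Prop :=
  ∀ K : Set Y, IsCompact K → IsOpen {x | K ⊆ φ x}

/-- `dim X ≤ m`: every open cover has an open refinement (still a cover) such that any
`m + 2` pairwise distinct members of the refinement have empty intersection. -/
def DimLE (X : Type*) [TopologicalSpace X] (m : ℤ) : Prop :=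
  ∀ 𝒰 : Set (Set X), (∀ U ∈ 𝒰, IsOpen U) → ⋃₀ 𝒰 = univ →
    ∃ 𝒱 : Set (Set X), (∀ V ∈ 𝒱, IsOpen V) ∧ ⋃₀ 𝒱 = univ ∧
      (∀ V ∈ 𝒱, ∃ U ∈ 𝒰, V ⊆ U) ∧
      ∀ σ : Finset (Set X), ↑σ ⊆ 𝒱 → (σ.card : ℤ) = m + 2 → ⋂₀ (σ : Set (Set X)) = ∅

/-- The open `ε`-neighbourhood `O_ε(S)` of a set `S` in a metric space. -/
def ONbhd {Y : Type*} [PseudoMetricSpace Y] (ε : ℝ) (S : Set Y) : Set Y :=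
  ⋃ y ∈ S, ball y ε


lemma glue_closed {Z Y κ : Type*} [TopologicalSpace Z] [TopologicalSpace Y] [Finite κ]
    (y0 : Y) (s : κ → Set Z) (f : κ → Z → Y) (hs : ∀ i, IsClosed (s i))
    (hf : ∀ i, ContinuousOn (f i) (s i))
    (hag : ∀ i j, ∀ z ∈ s i, z ∈ s j → f i z = f j z) :
    ∃ F : Z → Y, ContinuousOn F (⋃ i, s i) ∧ ∀ i, ∀ z ∈ s i, F z = f i z := by
  classical
  let F : Z → Y := fun z => if h : ∃ i, z ∈ s i then f h.choose z else y0
  have hF : ∀ i, ∀ z ∈ s i, F z = f i z := by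
    intro i z hz
    have h : ∃ i, z ∈ s i := ⟨i, hz⟩
    simp only [F, dif_pos h]
    exact hag _ _ z h.choose_spec hz
  refine ⟨F, ?_, hF⟩
  refine LocallyFinite.continuousOn_iUnion (locallyFinite_of_finite s) hs fun i => ?_
  exact (hf i).congr fun z hz => hF i z hz

/-- The face of the unit cube spanned by the coordinates in `J`. -/
def cub {ι : Type*} (J : Finset ι) : Set (ι → ℝ) :=
  {u | (∀ i, 0 ≤ u i ∧ u i ≤ 1) ∧ ∀ i, i ∉ J → u i = 0}

lemma cub_closed {ι : Type*} (J : Finset ι) : IsClosed (cub J) := by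
  have : cub J = (⋂ i, {u : ι → ℝ | 0 ≤ u i}) ∩ (⋂ i, {u : ι → ℝ | u i ≤ 1}) ∩
      ⋂ i, ⋂ (_ : i ∉ J), {u : ι → ℝ | u i = 0} := by
    ext u; simp [cub, forall_and]
  rw [this]
  refine IsClosed.inter (IsClosed.inter ?_ ?_) ?_
  · exact isClosed_iInter fun i => isClosed_le continuous_const (continuous_apply i)
  · exact isClosed_iInter fun i => isClosed_le (continuous_apply i) continuous_const
  · exact isClosed_iInter fun i => isClosed_iInter fun _ =>
      isClosed_eq (continuous_apply i) continuous_const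

lemma cub_compact {ι : Type*} (J : Finset ι) : IsCompact (cub J) := by
  refine IsCompact.of_isClosed_subset
    (isCompact_univ_pi (s := fun _ : ι => Icc (0 : ℝ) 1) fun _ => isCompact_Icc) (cub_closed J) ?_
  intro u hu i _
  exact hu.1 i

lemma cub_mono {ι : Type*} {J J' : Finset ι} (h : J ⊆ J') : cub J ⊆ cub J' :=
  fun _ hu => ⟨hu.1, fun i hi => hu.2 i fun h' => hi (h h')⟩

lemma cub_inter {ι : Type*} [DecidableEq ι] {J J' : Finset ι} {u : ι → ℝ} (h : u ∈ cub J)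
    (h' : u ∈ cub J') : u ∈ cub (J ∩ J') := by
  refine ⟨h.1, fun i hi => ?_⟩
  by_cases h1 : i ∈ J
  · exact h'.2 i fun h2 => hi (Finset.mem_inter.2 ⟨h1, h2⟩)
  · exact h.2 i h1

lemma norm_one_iff {ι : Type*} [Fintype ι] {u : ι → ℝ} (hu : ∀ i, 0 ≤ u i ∧ u i ≤ 1) :
    ‖u‖ = 1 ↔ ∃ i, u i = 1 := by
  constructor
  · intro h
    by_contra! hne
    have : ‖u‖ < 1 := by
      rw [pi_norm_lt_iff one_pos]
      intro i
      rw [Real.norm_eq_abs, abs_of_nonneg (hu i).1]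
      exact lt_of_le_of_ne (hu i).2 (hne i)
    linarith
  · rintro ⟨i, hi⟩
    apply le_antisymm
    · rw [pi_norm_le_iff_of_nonneg zero_le_one]
      intro i
      rw [Real.norm_eq_abs, abs_of_nonneg (hu i).1]
      exact (hu i).2
    · have := norm_le_pi_norm u i
      rw [hi] at this
      simpa using this

lemma cube_homeo (n : ℕ) : ∃ e : EuclideanSpace ℝ (Fin (n + 1)) ≃ₜ EuclideanSpace ℝ (Fin (n + 1)),
    (∀ v, (∀ i, 0 ≤ v i ∧ v i ≤ 1) ↔ e v ∈ closedBall (0 : EuclideanSpace ℝ (Fin (n + 1))) 1) ∧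
    (∀ v, (∀ i, 0 ≤ v i ∧ v i ≤ 1) →
      ((∃ i, v i = 0 ∨ v i = 1) ↔ e v ∈ sphere (0 : EuclideanSpace ℝ (Fin (n + 1))) 1)) := by
  let L := (EuclideanSpace.equiv (Fin (n + 1)) ℝ)
  let φ : EuclideanSpace ℝ (Fin (n + 1)) ≃ₜ (Fin (n + 1) → ℝ) := L.toHomeomorph
  let P : Set (Fin (n + 1) → ℝ) := Set.pi univ fun _ => Icc (0 : ℝ) 1
  let Q : Set (EuclideanSpace ℝ (Fin (n + 1))) := φ ⁻¹' P
  have hQ : ∀ v, v ∈ Q ↔ ∀ i, 0 ≤ v i ∧ v i ≤ 1 := by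
    intro v; simp only [Q, P, mem_preimage, mem_pi, mem_univ, true_imp_iff, mem_Icc]; rfl
  have hQint : ∀ v, v ∈ interior Q ↔ ∀ i, 0 < v i ∧ v i < 1 := by
    intro v
    have : interior Q = φ ⁻¹' (Set.pi univ fun _ => Ioo (0 : ℝ) 1) := by
      rw [← φ.preimage_interior, interior_pi_set finite_univ]
      simp
    rw [this]
    simp only [mem_preimage, mem_pi, mem_univ, true_imp_iff, mem_Ioo]; rfl
  have hPc : IsCompact P := isCompact_univ_pi fun _ => isCompact_Icc
  have hQc : IsCompact Q := φ.isCompact_preimage.2 hPc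
  have hconv : Convex ℝ Q := by
    have : Convex ℝ P := convex_pi fun _ _ => convex_Icc 0 1
    exact this.linear_preimage L.toLinearEquiv.toLinearMap
  have hne : (interior Q).Nonempty := by
    refine ⟨WithLp.toLp 2 fun _ => 1 / 2, ?_⟩
    rw [hQint]
    intro i
    norm_num
  obtain ⟨e, h1, h2, h3⟩ := exists_homeomorph_image_interior_closure_frontier_eq_unitBall hconv hne
    hQc.isBounded
  refine ⟨e, fun v => ?_, fun v hv => ?_⟩
  · rw [← hQ, ← h2, hQc.isClosed.closure_eq]
    exact (e.injective.mem_set_image).symm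
  · rw [← h3, e.injective.mem_set_image, hQc.isClosed.frontier_eq]
    simp only [mem_sdiff, hQint, hQ]
    constructor
    · rintro ⟨i, hi⟩
      refine ⟨hv, fun h => ?_⟩
      have := h i
      rcases hi with hi | hi <;> linarith
    · rintro ⟨-, h⟩
      by_contra! hc
      exact h fun i => ⟨lt_of_le_of_ne (hv i).1 (Ne.symm (hc i).1),
        lt_of_le_of_ne (hv i).2 (hc i).2⟩

lemma cube_ext {ι Y : Type*} [Fintype ι] [TopologicalSpace Y] {n : ℕ} {J : Finset ι}
    (hJ : J.card = n + 1) {A B : Set Y} (hE : EmbedK n A B) (h0 : (ι → ℝ) → Y)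
    (hc : ContinuousOn h0 {u | u ∈ cub J ∧ (‖u‖ = 1 ∨ ∃ j ∈ J, u j = 0)})
    (hA : ∀ u ∈ cub J, (‖u‖ = 1 ∨ ∃ j ∈ J, u j = 0) → h0 u ∈ A) :
    ∃ h : (ι → ℝ) → Y, ContinuousOn h (cub J) ∧ (∀ u ∈ cub J, h u ∈ B) ∧
      ∀ u ∈ cub J, (‖u‖ = 1 ∨ ∃ j ∈ J, u j = 0) → h u = h0 u := by
  classical
  obtain ⟨e, he1, he2⟩ := cube_homeo n
  let e0 := J.equivFinOfCardEq hJ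
  let θ : EuclideanSpace ℝ (Fin (n + 1)) → ι → ℝ :=
    fun v i => if hi : i ∈ J then v (e0 ⟨i, hi⟩) else 0
  let ρ : (ι → ℝ) → EuclideanSpace ℝ (Fin (n + 1)) :=
    fun u => WithLp.toLp 2 fun j => u (e0.symm j).1
  have hθc : Continuous θ := by
    refine continuous_pi fun i => ?_
    by_cases hi : i ∈ J
    · simp only [θ, dif_pos hi]; fun_prop
    · simp only [θ, dif_neg hi]; fun_prop
  have hρc : Continuous ρ := by
    simp only [ρ]; fun_prop
  have hθρ : ∀ u ∈ cub J, θ (ρ u) = u := by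
    intro u hu
    funext i
    by_cases hi : i ∈ J
    · simp [θ, ρ, dif_pos hi]
    · simp [θ, dif_neg hi, hu.2 i hi]
  have hρ01 : ∀ u ∈ cub J, ∀ i, 0 ≤ ρ u i ∧ ρ u i ≤ 1 := fun u hu i => hu.1 _
  have hθcub : ∀ v : EuclideanSpace ℝ (Fin (n + 1)), (∀ i, 0 ≤ v i ∧ v i ≤ 1) → θ v ∈ cub J := by
    intro v hv
    refine ⟨fun i => ?_, fun i hi => by simp [θ, dif_neg hi]⟩
    by_cases hi : i ∈ J
    · simp only [θ, dif_pos hi]; exact hv _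
    · simp [θ, dif_neg hi]
  have hθb : ∀ v : EuclideanSpace ℝ (Fin (n + 1)), (∀ i, 0 ≤ v i ∧ v i ≤ 1) →
      (∃ i, v i = 0 ∨ v i = 1) → (‖θ v‖ = 1 ∨ ∃ j ∈ J, θ v j = 0) := by
    rintro v hv ⟨i, hi | hi⟩
    · right
      refine ⟨(e0.symm i).1, (e0.symm i).2, ?_⟩
      simp [θ, hi]
    · left
      rw [norm_one_iff (hθcub v hv).1]
      refine ⟨(e0.symm i).1, ?_⟩
      simp [θ, hi]
  have hρb : ∀ u ∈ cub J, (‖u‖ = 1 ∨ ∃ j ∈ J, u j = 0) → ∃ i, ρ u i = 0 ∨ ρ u i = 1 := by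
    rintro u hu (h | ⟨j, hj, h⟩)
    · obtain ⟨j, hj⟩ := (norm_one_iff hu.1).1 h
      have hjJ : j ∈ J := by
        by_contra hn
        rw [hu.2 j hn] at hj
        norm_num at hj
      exact ⟨e0 ⟨j, hjJ⟩, Or.inr (by simp [ρ, hj])⟩
    · exact ⟨e0 ⟨j, hj⟩, Or.inl (by simp [ρ, h])⟩
  have hsph : ∀ p : sphere (0 : EuclideanSpace ℝ (Fin (n + 1))) 1,
      (∀ i, 0 ≤ e.symm p.1 i ∧ e.symm p.1 i ≤ 1) ∧
        (∃ i, e.symm p.1 i = 0 ∨ e.symm p.1 i = 1) := by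
    intro p
    have h1 : ∀ i, 0 ≤ e.symm p.1 i ∧ e.symm p.1 i ≤ 1 := by
      rw [he1, e.apply_symm_apply]; exact sphere_subset_closedBall p.2
    exact ⟨h1, (he2 _ h1).2 (by rw [e.apply_symm_apply]; exact p.2)⟩
  obtain ⟨h, hhc, hhB, hhg⟩ := hE (fun p => h0 (θ (e.symm p.1)))
    (by
      refine hc.comp_continuous (hθc.comp (e.symm.continuous.comp continuous_subtype_val)) ?_
      intro p
      exact ⟨hθcub _ (hsph p).1, hθb _ (hsph p).1 (hsph p).2⟩)
    (fun p => hA _ (hθcub _ (hsph p).1) (hθb _ (hsph p).1 (hsph p).2))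
  have hball : ∀ u ∈ cub J, e (ρ u) ∈ closedBall (0 : EuclideanSpace ℝ (Fin (n + 1))) 1 :=
    fun u hu => (he1 _).1 (hρ01 u hu)
  obtain ⟨b, hb⟩ : (closedBall (0 : EuclideanSpace ℝ (Fin (n + 1))) 1).Nonempty := ⟨0, by simp⟩
  refine ⟨fun u => if hu : u ∈ cub J then h ⟨e (ρ u), hball u hu⟩ else h ⟨b, hb⟩, ?_, ?_, ?_⟩
  · rw [continuousOn_iff_continuous_domRestrict]
    have : (cub J).domRestrict
        (fun u => if hu : u ∈ cub J then h ⟨e (ρ u), hball u hu⟩ else h ⟨b, hb⟩) =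
        fun u : cub J => h ⟨e (ρ u.1), hball u.1 u.2⟩ := by
      funext u
      simp [Set.domRestrict_apply]
    rw [this]
    refine hhc.comp (Continuous.subtype_mk ?_ _)
    exact e.continuous.comp (hρc.comp continuous_subtype_val)
  · intro u hu
    simp only [dif_pos hu]
    exact hhB _
  · intro u hu hub
    simp only [dif_pos hu]
    have := hhg ⟨e (ρ u), (he2 _ (hρ01 u hu)).1 (hρb u hu hub)⟩
    rw [this]
    simp only [e.symm_apply_apply, hθρ u hu]

lemma skel_closed {ι : Type*} [Fintype ι] (𝒦 : Set (Finset ι)) (p : Finset ι → Prop) :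
    IsClosed {u : ι → ℝ | ∃ J ∈ 𝒦, u ∈ cub J ∧ (‖u‖ = 1 ∨ p J)} := by
  have : {u : ι → ℝ | ∃ J ∈ 𝒦, u ∈ cub J ∧ (‖u‖ = 1 ∨ p J)} =
      ⋃ J ∈ 𝒦, (cub J ∩ ({u | ‖u‖ = 1} ∪ {_u | p J})) := by
    ext u
    simp only [mem_ofPred_eq, mem_iUnion, mem_inter_iff, mem_union, exists_prop]
  rw [this]
  refine Set.Finite.isClosed_biUnion (Set.toFinite _) fun J _ => (cub_closed J).inter ?_
  exact (isClosed_eq continuous_norm continuous_const).union isClosed_const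

/-- Skeletal extension of a map from the far faces of a cubical cone to the whole of it. -/
lemma skel_ext {ι Y : Type*} [Fintype ι] [TopologicalSpace Y] (k : ℕ)
    (A : ℕ → Set Y) (hne : (A 0).Nonempty)
    (hE : ∀ i < k, EmbedK i (A i) (A (i + 1)))
    (𝒦 : Set (Finset ι)) (hlow : ∀ J ∈ 𝒦, ∀ J' ⊆ J, J' ∈ 𝒦) (hcard : ∀ J ∈ 𝒦, J.card ≤ k)
    (F : (ι → ℝ) → Y)
    (hF : ContinuousOn F {u | ∃ J ∈ 𝒦, u ∈ cub J ∧ ‖u‖ = 1})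
    (hFA : ∀ J ∈ 𝒦, ∀ u ∈ cub J, ‖u‖ = 1 → F u ∈ A (J.card - 1)) :
    ∃ H : (ι → ℝ) → Y, ContinuousOn H {u | ∃ J ∈ 𝒦, u ∈ cub J} ∧
      (∀ J ∈ 𝒦, ∀ u ∈ cub J, ‖u‖ = 1 → H u = F u) ∧
      ∀ J ∈ 𝒦, ∀ u ∈ cub J, H u ∈ A J.card := by
  classical
  obtain ⟨p, hp⟩ := hne
  have key : ∀ n, n ≤ k → ∃ H : (ι → ℝ) → Y,
      ContinuousOn H {u | ∃ J ∈ 𝒦, u ∈ cub J ∧ (‖u‖ = 1 ∨ J.card ≤ n)} ∧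
      (∀ J ∈ 𝒦, ∀ u ∈ cub J, ‖u‖ = 1 → H u = F u) ∧
      ∀ J ∈ 𝒦, J.card ≤ n → ∀ u ∈ cub J, H u ∈ A J.card := by
    intro n
    induction n with
    | zero =>
      intro _
      have hcl : IsClosed {u : ι → ℝ | ∃ J ∈ 𝒦, u ∈ cub J ∧ ‖u‖ = 1} := by
        simpa using skel_closed 𝒦 (fun _ => False)
      obtain ⟨H, hHc, hH⟩ := glue_closed (κ := Bool) p
        (fun b => if b then {(0 : ι → ℝ)} else {u : ι → ℝ | ∃ J ∈ 𝒦, u ∈ cub J ∧ ‖u‖ = 1})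
        (fun b => if b then fun _ => p else F)
        (by rintro (_ | _) <;> simp [hcl])
        (by rintro (_ | _) <;> simp [hF])
        (by
          rintro (_ | _) (_ | _) <;> simp
          · rintro z J hJ hz h1 rfl
            simp at h1
)
      have hHt := hH true
      have hHf := hH false
      simp at hHt hHf
      refine ⟨H, hHc.mono ?_, ?_, ?_⟩
      · rintro u ⟨J, hJ, hu, h | h⟩
        · refine mem_iUnion.2 ⟨false, ?_⟩
          simpa using ⟨J, hJ, hu, h⟩
        · refine mem_iUnion.2 ⟨true, ?_⟩
          have : J = ∅ := by simpa using h
          subst this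
          have : u = 0 := funext fun i => hu.2 i (by simp)
          simpa using this
      · intro J hJ u hu h
        exact hHf u J hJ hu h
      · intro J hJ h u hu
        have : J = ∅ := by simpa using h
        subst this
        have : u = 0 := funext fun i => hu.2 i (by simp)
        subst this
        rw [hHt]
        simpa using hp
    | succ n ih =>
      intro hn
      obtain ⟨H0, hc0, hF0, hA0⟩ := ih (by omega)
      have hext : ∀ J : {J // J ∈ 𝒦 ∧ J.card = n + 1}, ∃ h : (ι → ℝ) → Y,
          ContinuousOn h (cub J.1) ∧ (∀ u ∈ cub J.1, h u ∈ A (n + 1)) ∧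
          ∀ u ∈ cub J.1, (‖u‖ = 1 ∨ ∃ j ∈ J.1, u j = 0) → h u = H0 u := by
        rintro ⟨J, hJ, hJc⟩
        have herase : ∀ u ∈ cub J, ∀ j ∈ J, u j = 0 → u ∈ cub (J.erase j) := by
          intro u hu j hj h
          refine ⟨hu.1, fun i hi => ?_⟩
          by_cases hij : i = j
          · rw [hij, h]
          · exact hu.2 i fun h' => hi (Finset.mem_erase.2 ⟨hij, h'⟩)
        have hcarde : ∀ j ∈ J, (J.erase j).card = n := by
          intro j hj
          rw [Finset.card_erase_of_mem hj, hJc]; rfl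
        refine cube_ext hJc (hE n (by omega)) H0 (hc0.mono ?_) ?_
        · rintro u ⟨hu, h | ⟨j, hj, h⟩⟩
          · exact ⟨J, hJ, hu, Or.inl h⟩
          · exact ⟨J.erase j, hlow J hJ _ (Finset.erase_subset _ _), herase u hu j hj h,
              Or.inr (hcarde j hj).le⟩
        · rintro u hu (h | ⟨j, hj, h⟩)
          · rw [hF0 J hJ u hu h]
            have := hFA J hJ u hu h
            rwa [hJc] at this
          · have := hA0 _ (hlow J hJ _ (Finset.erase_subset j _)) (hcarde j hj).le u
              (herase u hu j hj h)
            rwa [hcarde j hj] at this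
      choose h hhc hhA hhH using hext
      have hag : ∀ J : {J // J ∈ 𝒦 ∧ J.card = n + 1}, ∀ u ∈ cub J.1,
          u ∈ {u | ∃ J ∈ 𝒦, u ∈ cub J ∧ (‖u‖ = 1 ∨ J.card ≤ n)} → h J u = H0 u := by
        rintro J u hu ⟨J', hJ', hu', h1 | h1⟩
        · exact hhH J u hu (Or.inl h1)
        · refine hhH J u hu (Or.inr ?_)
          have : ∃ j ∈ J.1, j ∉ J' := by
            by_contra! hcon
            have := Finset.card_le_card (show J.1 ⊆ J' from hcon)
            have := J.2.2
            omega
          obtain ⟨j, hj, hj'⟩ := this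
          exact ⟨j, hj, hu'.2 j hj'⟩
      obtain ⟨H, hHc, hH⟩ := glue_closed (κ := Option {J // J ∈ 𝒦 ∧ J.card = n + 1}) p
        (fun o => o.elim {u | ∃ J ∈ 𝒦, u ∈ cub J ∧ (‖u‖ = 1 ∨ J.card ≤ n)} fun J => cub J.1)
        (fun o => o.elim H0 h)
        (by
          rintro (_ | J)
          · exact skel_closed 𝒦 _
          · exact cub_closed _)
        (by
          rintro (_ | J)
          · exact hc0
          · exact hhc J)
        (by
          rintro (_ | J) (_ | J') u hu hu'
          · rfl
          · exact (hag J' u hu' hu).symm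
          · exact hag J u hu hu'
          · by_cases hJJ : J = J'
            · rw [hJJ]
            · have hmem : u ∈ {u | ∃ J ∈ 𝒦, u ∈ cub J ∧ (‖u‖ = 1 ∨ J.card ≤ n)} := by
                refine ⟨J.1 ∩ J'.1, hlow J.1 J.2.1 _ Finset.inter_subset_left,
                  cub_inter hu hu', Or.inr ?_⟩
                by_contra! hcon
                have e1 : J.1 ∩ J'.1 = J.1 := Finset.eq_of_subset_of_card_le
                  Finset.inter_subset_left (by rw [J.2.2]; omega)
                have e2 : J.1 ∩ J'.1 = J'.1 := Finset.eq_of_subset_of_card_le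
                  Finset.inter_subset_right (by rw [J'.2.2]; omega)
                exact hJJ (Subtype.ext (e1.symm.trans e2))
              exact (hag J u hu hmem).trans (hag J' u hu' hmem).symm)
      have hHn := hH none
      have hHs := fun J => hH (some J)
      refine ⟨H, hHc.mono ?_, ?_, ?_⟩
      · rintro u ⟨J, hJ, hu, h1 | h1⟩
        · exact mem_iUnion.2 ⟨none, J, hJ, hu, Or.inl h1⟩
        · rcases h1.lt_or_eq with h1 | h1
          · exact mem_iUnion.2 ⟨none, J, hJ, hu, Or.inr (by omega)⟩
          · exact mem_iUnion.2 ⟨some ⟨J, hJ, h1⟩, hu⟩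
      · intro J hJ u hu h1
        rw [hHn u ⟨J, hJ, hu, Or.inl h1⟩]
        exact hF0 J hJ u hu h1
      · intro J hJ h1 u hu
        rcases h1.lt_or_eq with h1 | h1
        · rw [hHn u ⟨J, hJ, hu, Or.inr (by omega)⟩]
          exact hA0 J hJ (by omega) u hu
        · rw [hHs ⟨J, hJ, h1⟩ u hu]
          have h2 : A J.card = A (n + 1) := congrArg A h1
          rw [h2]
          exact hhA ⟨J, hJ, h1⟩ u hu
  obtain ⟨H, h1, h2, h3⟩ := key k le_rfl
  refine ⟨H, h1.mono ?_, h2, fun J hJ u hu => h3 J hJ (hcard J hJ) u hu⟩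
  rintro u ⟨J, hJ, hu⟩
  exact ⟨J, hJ, hu, Or.inr (hcard J hJ)⟩


/-- Grid cells. -/
lemma grid_cells (d : ℕ) (A : Set ℝ) (hA : A.Finite) (η : ℝ) (hη : 0 < η) :
    ∃ (A' : Set ℝ) (κ : Type) (_ : Fintype κ)
      (V : κ → Set (sphere (0 : Fin d → ℝ) 1)),
      A'.Finite ∧ A' ⊆ Ioo (-1) 1 ∧ Disjoint A A' ∧
      (∀ b, IsOpen (V b)) ∧ (∀ b b', ∀ x ∈ V b, x ∈ V b' → b = b') ∧
      (∀ b, ∀ x ∈ V b, ∀ y ∈ V b, dist x y ≤ η) ∧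
      (∀ x : sphere (0 : Fin d → ℝ) 1, (∀ b, x ∉ V b) → ∃ j, x.1 j ∈ A') := by
  have hfin : ((fun a => Int.fract (a / η)) '' (A ∪ {1, -1})).Finite :=
    (hA.union (by simp)).image _
  obtain ⟨θ, hθ, hθA⟩ := (Set.Ioo_infinite (show (0 : ℝ) < 1 by norm_num)).exists_notMem_finite hfin
  have hlat : ∀ a ∈ A ∪ {1, -1}, ∀ z : ℤ, a ≠ (z + θ) * η := by
    rintro a ha z rfl
    apply hθA
    refine ⟨_, ha, ?_⟩
    have : (z + θ) * η / η = z + θ := by field_simp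
    simp only [this]
    rw [Int.fract_intCast_add, Int.fract_eq_self]
    exact ⟨hθ.1.le, hθ.2⟩
  obtain ⟨M, hM⟩ := exists_nat_gt (1 / η + 2)
  let I := Finset.Icc (-(M : ℤ)) M
  have hrange : ∀ z : ℤ, ∀ t : ℝ, -1 ≤ t → t ≤ 1 → (z : ℝ) ≤ t / η - θ → t / η - θ < z + 1 →
      z ∈ I := by
    intro z t h1 h2 h3 h4
    have e1 : t / η ≤ 1 / η := by gcongr
    have e2 : -(1 / η) ≤ t / η := by rw [← neg_div]; gcongr
    have := hθ.1
    have := hθ.2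
    rw [Finset.mem_Icc]
    constructor
    · have : (-(M : ℝ)) ≤ z := by linarith
      exact_mod_cast this
    · have : (z : ℝ) ≤ M := by linarith
      exact_mod_cast this
  have hcoord : ∀ x : sphere (0 : Fin d → ℝ) 1, ∀ j, -1 ≤ x.1 j ∧ x.1 j ≤ 1 := by
    intro x j
    have h1 : ‖x.1‖ = 1 := by simp
    have h2 := norm_le_pi_norm x.1 j
    rw [h1, Real.norm_eq_abs, abs_le] at h2
    exact h2
  refine ⟨((fun z : ℤ => (z + θ) * η) '' (I : Set ℤ)) ∩ Ioo (-1) 1, Fin d → I, inferInstance,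
    fun b => {x | ∀ j, ((b j : ℤ) : ℝ) < x.1 j / η - θ ∧ x.1 j / η - θ < (b j : ℤ) + 1},
    ((Finset.finite_toSet I).image _).inter_of_left _, inter_subset_right, ?_, ?_, ?_, ?_, ?_⟩
  · rw [Set.disjoint_left]
    rintro a ha ⟨⟨z, -, hz⟩, -⟩
    exact hlat a (Or.inl ha) z hz.symm
  · intro b
    have : {x : sphere (0 : Fin d → ℝ) 1 | ∀ j, ((b j : ℤ) : ℝ) < x.1 j / η - θ ∧
        x.1 j / η - θ < (b j : ℤ) + 1} = ⋂ j, ({x | ((b j : ℤ) : ℝ) < x.1 j / η - θ} ∩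
          {x | x.1 j / η - θ < (b j : ℤ) + 1}) := by
      ext x; simp
    beta_reduce
    rw [this]
    refine isOpen_iInter_of_finite fun j => ?_
    have hc : Continuous fun x : sphere (0 : Fin d → ℝ) 1 => x.1 j / η - θ := by
      have h0 : Continuous fun x : sphere (0 : Fin d → ℝ) 1 => x.1 j :=
        (continuous_apply j).comp continuous_subtype_val
      have h1 := h0.div_const η
      exact h1.sub (continuous_const (y := θ))
    exact (isOpen_lt continuous_const hc).inter (isOpen_lt hc continuous_const)
  · intro b b' x hx hx'
    funext j
    apply Subtype.ext
    have h1 := hx j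
    have h2 := hx' j
    have e1 : ((b j : ℤ) : ℝ) < (b' j : ℤ) + 1 := h1.1.trans h2.2
    have e2 : ((b' j : ℤ) : ℝ) < (b j : ℤ) + 1 := h2.1.trans h1.2
    have e1' : (b j : ℤ) < (b' j : ℤ) + 1 := by exact_mod_cast e1
    have e2' : (b' j : ℤ) < (b j : ℤ) + 1 := by exact_mod_cast e2
    omega
  · intro b x hx y hy
    rw [Subtype.dist_eq, dist_pi_le_iff hη.le]
    intro j
    have h1 := hx j
    have h2 := hy j
    rw [Real.dist_eq]
    have : |x.1 j / η - y.1 j / η| ≤ 1 := by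
      rw [abs_le]; constructor <;> linarith
    rw [← sub_div, abs_div, abs_of_pos hη, div_le_one hη] at this
    exact this
  · intro x hx
    by_contra! hcon
    have hcell : ∀ j, ((⌊x.1 j / η - θ⌋ : ℤ) : ℝ) < x.1 j / η - θ := by
      intro j
      refine lt_of_le_of_ne (Int.floor_le _) fun heq => ?_
      have hI : ⌊x.1 j / η - θ⌋ ∈ I := hrange _ (x.1 j) (hcoord x j).1 (hcoord x j).2
        (Int.floor_le _) (Int.lt_floor_add_one _)
      have hval : x.1 j = ((⌊x.1 j / η - θ⌋ : ℤ) + θ) * η := by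
        rw [heq]; field_simp; ring
      apply hcon j
      refine ⟨⟨_, hI, hval.symm⟩, lt_of_le_of_ne (hcoord x j).1 fun h => ?_,
        lt_of_le_of_ne (hcoord x j).2 fun h => ?_⟩
      · exact hlat (-1) (by simp) _ (h.trans hval)
      · exact hlat 1 (by simp) _ (h.symm.trans hval)
    refine hx (fun j => ⟨⌊x.1 j / η - θ⌋, hrange _ (x.1 j) (hcoord x j).1 (hcoord x j).2
        (Int.floor_le _) (Int.lt_floor_add_one _)⟩) fun j => ⟨hcell j, Int.lt_floor_add_one _⟩


/-- State of the construction after `m` stages. -/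
def Stage {Y : Type*} [TopologicalSpace Y] (d : ℕ)
    (φ : ℕ → sphere (0 : Fin d → ℝ) 1 → Set Y) (m : ℕ) : Prop :=
  ∃ (ι : Type) (_ : Fintype ι) (lev : ι → Fin m) (V : ι → Set (sphere (0 : Fin d → ℝ) 1))
    (F : (ι → ℝ) → Y) (A : Set ℝ),
    (∀ c, IsOpen (V c)) ∧
    (∀ c c' x, lev c = lev c' → x ∈ V c → x ∈ V c' → c = c') ∧
    ContinuousOn F {u | ∃ J : Finset ι, (InjOn lev (J : Set ι) ∧ ∃ x, ∀ c ∈ J, x ∈ closure (V c)) ∧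
      u ∈ cub J ∧ ‖u‖ = 1} ∧
    (∀ J : Finset ι, InjOn lev (J : Set ι) → ∀ x, (∀ c ∈ J, x ∈ closure (V c)) →
      ∀ u ∈ cub J, ‖u‖ = 1 → F u ∈ φ (J.card - 1) x) ∧
    A.Finite ∧ A ⊆ Ioo (-1) 1 ∧
    ∀ x, (∀ c, x ∉ V c) → m ≤ {j | x.1 j ∈ A}.ncard

lemma stage_zero {Y : Type*} [TopologicalSpace Y] [Nonempty Y] (d : ℕ)
    (φ : ℕ → sphere (0 : Fin d → ℝ) 1 → Set Y) : Stage d φ 0 := by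
  refine ⟨Empty, inferInstance, Empty.elim, Empty.elim, fun _ => Classical.arbitrary Y, ∅,
    fun c => c.elim, fun c => c.elim, continuousOn_const, ?_, by simp, by simp, by simp⟩
  intro J _ x _ u hu h
  obtain ⟨i, _⟩ := (norm_one_iff hu.1).1 h
  exact i.elim

lemma stage_succ {Y : Type*} [TopologicalSpace Y] (d k : ℕ)
    (hX : Nonempty (sphere (0 : Fin d → ℝ) 1))
    (φ : ℕ → sphere (0 : Fin d → ℝ) 1 → Set Y)
    (hmono : ∀ x, Monotone fun i => φ i x) (hne : ∀ x, (φ 0 x).Nonempty)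
    (hE : ∀ x, ∀ i < k, EmbedK i (φ i x) (φ (i + 1) x))
    (hllc : ∀ i x, ∀ K : Set Y, IsCompact K → K ⊆ φ i x → ∀ᶠ x' in nhds x, K ⊆ φ i x')
    (m : ℕ) (hm : m ≤ k) (hst : Stage d φ m) : Stage d φ (m + 1) := by
  classical
  obtain ⟨ι, _, lev, V, F, A, hVo, hVd, hFc, hFφ, hAf, hA1, hAc⟩ := hst
  -- extensions over cones
  have hH : ∀ y, ∃ H : (ι → ℝ) → Y,
      ContinuousOn H {u | ∃ J ∈ {J : Finset ι | InjOn lev (J : Set ι) ∧ ∀ c ∈ J, y ∈ closure (V c)},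
        u ∈ cub J} ∧
      (∀ J ∈ {J : Finset ι | InjOn lev (J : Set ι) ∧ ∀ c ∈ J, y ∈ closure (V c)},
        ∀ u ∈ cub J, ‖u‖ = 1 → H u = F u) ∧
      ∀ J ∈ {J : Finset ι | InjOn lev (J : Set ι) ∧ ∀ c ∈ J, y ∈ closure (V c)},
        ∀ u ∈ cub J, H u ∈ φ J.card y := by
    intro y
    refine skel_ext k (fun i => φ i y) (hne y) (hE y) _ ?_ ?_ F (hFc.mono ?_) ?_
    · rintro J ⟨h1, h2⟩ J' hJ'
      exact ⟨h1.mono (by exact_mod_cast hJ'), fun c hc => h2 c (hJ' hc)⟩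
    · rintro J ⟨h1, -⟩
      have := Finset.card_le_card_of_injOn (t := Finset.univ) lev (by simp) h1
      simp at this
      omega
    · rintro u ⟨J, ⟨h1, h2⟩, hu, h3⟩
      exact ⟨J, ⟨h1, y, h2⟩, hu, h3⟩
    · rintro J ⟨h1, h2⟩ u hu h3
      exact hFφ J h1 y h2 u hu h3
  choose H hHc hHF hHφ using hH
  have hW : ∀ y, ∃ W : Set (sphere (0 : Fin d → ℝ) 1), IsOpen W ∧ y ∈ W ∧
      (∀ x ∈ W, ∀ c, x ∈ closure (V c) → y ∈ closure (V c)) ∧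
      (∀ x ∈ W, ∀ J : Finset ι, InjOn lev (J : Set ι) → (∀ c ∈ J, y ∈ closure (V c)) →
        ∀ u ∈ cub J, H y u ∈ φ J.card x) := by
    intro y
    have e1 : ∀ᶠ x in nhds y, ∀ c, x ∈ closure (V c) → y ∈ closure (V c) := by
      rw [Filter.eventually_all]
      intro c
      by_cases hc : y ∈ closure (V c)
      · exact Filter.Eventually.of_forall fun _ _ => hc
      · filter_upwards [isClosed_closure.isOpen_compl.mem_nhds hc] with x hx hx'
        exact absurd hx' hx
    have e2 : ∀ᶠ x in nhds y, ∀ J : Finset ι, InjOn lev (J : Set ι) →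
        (∀ c ∈ J, y ∈ closure (V c)) → ∀ u ∈ cub J, H y u ∈ φ J.card x := by
      rw [Filter.eventually_all]
      intro J
      by_cases h1 : InjOn lev (J : Set ι) ∧ ∀ c ∈ J, y ∈ closure (V c)
      · have hK : IsCompact (H y '' cub J) :=
          (cub_compact J).image_of_continuousOn ((hHc y).mono fun u hu => ⟨J, h1, hu⟩)
        have hKs : H y '' cub J ⊆ φ J.card y := by
          rintro _ ⟨u, hu, rfl⟩
          exact hHφ y J h1 u hu
        filter_upwards [hllc _ y _ hK hKs] with x hx _ _ u hu
        exact hx ⟨u, hu, rfl⟩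
      · exact Filter.Eventually.of_forall fun _ h2 h3 => absurd ⟨h2, h3⟩ h1
    obtain ⟨W, hW, hWo, hyW⟩ := _root_.eventually_nhds_iff.1 (e1.and e2)
    exact ⟨W, hWo, hyW, fun x hx => (hW x hx).1, fun x hx => (hW x hx).2⟩
  choose W hWo hyW hW1 hW2 using hW
  obtain ⟨r, hr, hleb⟩ := lebesgue_number_lemma_of_metric (isCompact_univ) hWo
    (fun y _ => mem_iUnion.2 ⟨y, hyW y⟩)
  obtain ⟨A', κ, _, U, hA'f, hA'1, hAA', hUo, hUd, hUr, hUc⟩ := grid_cells d A hAf (r / 2) (by linarith)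
  have hy : ∀ b, ∃ y, closure (U b) ⊆ W y := by
    intro b
    by_cases hb : (U b).Nonempty
    · obtain ⟨x, hx⟩ := hb
      obtain ⟨y, hy⟩ := hleb x (mem_univ x)
      refine ⟨y, subset_trans ?_ hy⟩
      have : closure (U b) ⊆ closedBall x (r / 2) :=
        closure_minimal (fun z hz => hUr b z hz x hx) isClosed_closedBall
      exact this.trans (closedBall_subset_ball (by linarith))
    · rw [not_nonempty_iff_eq_empty] at hb
      obtain ⟨y⟩ := hX
      exact ⟨y, by simp [hb]⟩
  choose y hy using hy
  let lev' : ι ⊕ κ → Fin (m + 1) := Sum.elim (fun c => (lev c).castSucc) fun _ => Fin.last m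
  let V' : ι ⊕ κ → Set (sphere (0 : Fin d → ℝ) 1) := Sum.elim V U
  let 𝒦 : Set (Finset (ι ⊕ κ)) :=
    {J | InjOn lev' (J : Set (ι ⊕ κ)) ∧ ∃ x, ∀ c ∈ J, x ∈ closure (V' c)}
  let D : Set (ι ⊕ κ → ℝ) := {u | ∃ J ∈ 𝒦, u ∈ cub J ∧ ‖u‖ = 1}
  have hDcl : IsClosed D := by simpa using skel_closed 𝒦 (fun _ => False)
  let old : (ι ⊕ κ → ℝ) → ι → ℝ := fun u c => u (Sum.inl c)
  have hold : Continuous old := by fun_prop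
  let L : Finset (ι ⊕ κ) → Finset ι := fun J => J.preimage Sum.inl Sum.inl_injective.injOn
  have hL : ∀ J c, c ∈ L J ↔ Sum.inl c ∈ J := by intro J c; simp [L]
  have hLinj : ∀ J : Finset (ι ⊕ κ), InjOn lev' (J : Set (ι ⊕ κ)) → InjOn lev (L J : Set ι) := by
    intro J hJ c hc c' hc' h
    have h1 : Sum.inl c = (Sum.inl c' : ι ⊕ κ) := hJ (by simpa [L] using hc) (by simpa [L] using hc')
      (by simp [lev', h])
    exact Sum.inl_injective h1
  have hLcub : ∀ J, ∀ u ∈ cub J, old u ∈ cub (L J) := by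
    intro J u hu
    refine ⟨fun c => hu.1 _, fun c hc => hu.2 _ ?_⟩
    rwa [hL] at hc
  have hLcl : ∀ (J : Finset (ι ⊕ κ)) x, (∀ c ∈ J, x ∈ closure (V' c)) → ∀ c ∈ L J, x ∈ closure (V c) := by
    intro J x hx c hc
    exact hx (Sum.inl c) ((hL J c).1 hc)
  have hLcard : ∀ J, (L J).card ≤ J.card := by
    intro J
    refine Finset.card_le_card_of_injOn Sum.inl ?_ Sum.inl_injective.injOn
    intro c hc
    exact (hL J c).1 hc
  have hLcard' : ∀ J b, Sum.inr b ∈ J → (L J).card + 1 ≤ J.card := by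
    intro J b hb
    have : (L J).card ≤ (J.erase (Sum.inr b)).card := by
      refine Finset.card_le_card_of_injOn Sum.inl ?_ Sum.inl_injective.injOn
      intro c hc
      have := (hL J c).1 hc
      simpa using this
    rw [Finset.card_erase_of_mem hb] at this
    have : 0 < J.card := Finset.card_pos.2 ⟨_, hb⟩
    omega
  have hinr : ∀ (J : Finset (ι ⊕ κ)) u b, u ∈ cub J → u (Sum.inr b) = 1 → Sum.inr b ∈ J := by
    intro J u b hu h
    by_contra hn
    rw [hu.2 _ hn] at h
    norm_num at h
  -- transfer to the centre `y b`
  have htrans : ∀ (J : Finset (ι ⊕ κ)) x b, (∀ c ∈ J, x ∈ closure (V' c)) → Sum.inr b ∈ J →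
      x ∈ W (y b) ∧ ∀ c ∈ L J, y b ∈ closure (V c) := by
    intro J x b hx hb
    have hxW : x ∈ W (y b) := hy b (hx _ hb)
    exact ⟨hxW, fun c hc => hW1 (y b) x hxW c (hLcl J x hx c hc)⟩
  have hcov : ∀ J, ∀ u ∈ cub J, ‖u‖ = 1 → ‖old u‖ = 1 ∨ ∃ b, u (Sum.inr b) = 1 := by
    intro J u hu h
    obtain ⟨c | b, hc⟩ := (norm_one_iff hu.1).1 h
    · exact Or.inl ((norm_one_iff fun i => hu.1 _).2 ⟨c, hc⟩)
    · exact Or.inr ⟨b, hc⟩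
  have hag : ∀ b, ∀ u ∈ D, ‖old u‖ = 1 → u (Sum.inr b) = 1 → H (y b) (old u) = F (old u) := by
    rintro b u ⟨J, ⟨hJ1, x, hx⟩, hu, -⟩ h1 h2
    have hb := hinr J u b hu h2
    exact hHF (y b) (L J) ⟨hLinj J hJ1, (htrans J x b hx hb).2⟩ _ (hLcub J u hu) h1
  obtain ⟨x0⟩ := hX
  obtain ⟨G, hGc, hG⟩ := glue_closed (κ := Option κ) (hne x0).some
    (fun o => o.elim (D ∩ {u | ‖old u‖ = 1}) fun b => D ∩ {u | u (Sum.inr b) = 1})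
    (fun o => o.elim (fun u => F (old u)) fun b u => H (y b) (old u))
    (by
      rintro (_ | b)
      · exact hDcl.inter (isClosed_eq hold.norm continuous_const)
      · exact hDcl.inter (isClosed_eq (continuous_apply _) continuous_const))
    (by
      rintro (_ | b)
      · refine hFc.comp hold.continuousOn ?_
        rintro u ⟨⟨J, ⟨hJ1, x, hx⟩, hu, -⟩, h1⟩
        exact ⟨L J, ⟨hLinj J hJ1, x, hLcl J x hx⟩, hLcub J u hu, h1⟩
      · refine (hHc (y b)).comp hold.continuousOn ?_
        rintro u ⟨⟨J, ⟨hJ1, x, hx⟩, hu, -⟩, h1⟩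
        exact ⟨L J, ⟨hLinj J hJ1, (htrans J x b hx (hinr J u b hu h1)).2⟩, hLcub J u hu⟩)
    (by
      rintro (_ | b) (_ | b') u ⟨hu, h1⟩ ⟨-, h2⟩
      · rfl
      · exact (hag b' u hu h1 h2).symm
      · exact hag b u hu h2 h1
      · obtain ⟨J, ⟨hJ1, x, hx⟩, huJ, -⟩ := hu
        have : Sum.inr b = (Sum.inr b' : ι ⊕ κ) :=
          hJ1 (hinr J u b huJ h1) (hinr J u b' huJ h2) (by simp [lev'])
        rw [Sum.inr_injective this])
  refine ⟨ι ⊕ κ, inferInstance, lev', V', G, A ∪ A', ?_, ?_, hGc.mono ?_, ?_, hAf.union hA'f,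
    union_subset hA1 hA'1, ?_⟩
  · rintro (c | b)
    · exact hVo c
    · exact hUo b
  · rintro (c | b) (c' | b') x hl hx hx'
    · have : lev c = lev c' := by simpa [lev'] using hl
      rw [hVd c c' x this hx hx']
    · simp only [lev', Sum.elim_inl, Sum.elim_inr] at hl
      exact absurd hl (Fin.castSucc_lt_last _).ne
    · simp only [lev', Sum.elim_inl, Sum.elim_inr] at hl
      exact absurd hl (Fin.castSucc_lt_last _).ne'
    · rw [hUd b b' x hx hx']
  · rintro u ⟨J, hJ, hu, h1⟩
    have huD : u ∈ D := ⟨J, hJ, hu, h1⟩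
    rcases hcov J u hu h1 with h | ⟨b, h⟩
    · exact mem_iUnion.2 ⟨none, huD, h⟩
    · exact mem_iUnion.2 ⟨some b, huD, h⟩
  · intro J hJ x hx u hu h1
    have huD : u ∈ D := ⟨J, ⟨hJ, x, hx⟩, hu, h1⟩
    rcases hcov J u hu h1 with h | ⟨b, h⟩
    · rw [hG none u ⟨huD, h⟩]
      have := hFφ (L J) (hLinj J hJ) x (hLcl J x hx) (old u) (hLcub J u hu) h
      exact hmono x (Nat.sub_le_sub_right (hLcard J) 1) this
    · rw [hG (some b) u ⟨huD, h⟩]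
      have hb := hinr J u b hu h
      obtain ⟨t1, t2⟩ := htrans J x b hx hb
      have := hW2 (y b) x t1 (L J) (hLinj J hJ) t2 (old u) (hLcub J u hu)
      exact hmono x (by have := hLcard' J b hb; omega) this
  · intro x hx
    have h1 := hAc x fun c => hx (Sum.inl c)
    obtain ⟨j, hj⟩ := hUc x fun b => hx (Sum.inr b)
    have hjA : x.1 j ∉ A := fun h => Set.disjoint_left.1 hAA' h hj
    have : (insert j {j | x.1 j ∈ A}).ncard = {j | x.1 j ∈ A}.ncard + 1 :=
      Set.ncard_insert_of_notMem hjA (Set.toFinite _)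
    have h2 : (insert j {j | x.1 j ∈ A}).ncard ≤ {j | x.1 j ∈ A ∪ A'}.ncard := by
      refine Set.ncard_le_ncard ?_ (Set.toFinite _)
      rintro i (rfl | hi)
      · exact Or.inr hj
      · exact Or.inl hi
    omega

lemma selection {Y : Type*} [TopologicalSpace Y] (k : ℕ)
    (φ : ℕ → sphere (0 : Fin (k + 1) → ℝ) 1 → Set Y)
    (hmono : ∀ x, Monotone fun i => φ i x) (hne : ∀ x, (φ 0 x).Nonempty)
    (hE : ∀ x, ∀ i < k, EmbedK i (φ i x) (φ (i + 1) x))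
    (hllc : ∀ i x, ∀ K : Set Y, IsCompact K → K ⊆ φ i x → ∀ᶠ x' in nhds x, K ⊆ φ i x') :
    ∃ f : sphere (0 : Fin (k + 1) → ℝ) 1 → Y, Continuous f ∧ ∀ x, f x ∈ φ k x := by
  classical
  have hX : Nonempty (sphere (0 : Fin (k + 1) → ℝ) 1) := ⟨⟨fun _ => 1, by simp [pi_norm_const]⟩⟩
  have hYn : Nonempty Y := ⟨(hne hX.some).some⟩
  have hall : ∀ m, m ≤ k + 1 → Stage (k + 1) φ m := by
    intro m
    induction m with
    | zero => exact fun _ => stage_zero _ _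
    | succ m ih =>
      exact fun h => stage_succ (k + 1) k hX φ hmono hne hE hllc m (by omega) (ih (by omega))
  obtain ⟨ι, _, lev, V, F, A, hVo, hVd, hFc, hFφ, hAf, hA1, hAc⟩ := hall (k + 1) le_rfl
  have hcov : ∀ x, ∃ c, x ∈ V c := by
    intro x
    by_contra! hcon
    have h1 := hAc x hcon
    have h2 : {j | x.1 j ∈ A} = univ := by
      apply Set.eq_of_subset_of_ncard_le (subset_univ _) _ (Set.toFinite _)
      simpa [Set.ncard_univ] using h1
    have h3 : ‖x.1‖ < 1 := by
      rw [pi_norm_lt_iff one_pos]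
      intro j
      have : j ∈ {j | x.1 j ∈ A} := by rw [h2]; trivial
      have := hA1 this
      rw [Real.norm_eq_abs, abs_lt]
      exact this
    have h4 : ‖x.1‖ = 1 := by simp
    linarith
  obtain ⟨ρ, hρ⟩ := PartitionOfUnity.exists_isSubordinate
    (isClosed_univ (X := sphere (0 : Fin (k + 1) → ℝ) 1)) V hVo
    (fun x _ => mem_iUnion.2 (hcov x))
  let v : sphere (0 : Fin (k + 1) → ℝ) 1 → ι → ℝ := fun x c => ρ c x
  have hvc : Continuous v := continuous_pi fun c => (ρ c).continuous
  have hv0 : ∀ x, v x ≠ 0 := by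
    intro x h
    obtain ⟨c, hc⟩ := ρ.exists_pos (mem_univ x)
    have : v x c = 0 := by rw [h]; rfl
    simp only [v] at this
    linarith
  have hvV : ∀ x c, v x c ≠ 0 → x ∈ V c := fun x c h => hρ c (subset_tsupport _ h)
  let w : sphere (0 : Fin (k + 1) → ℝ) 1 → ι → ℝ := fun x => ‖v x‖⁻¹ • v x
  have hwc : Continuous w := (hvc.norm.inv₀ fun x => norm_ne_zero_iff.2 (hv0 x)).smul hvc
  have hwn : ∀ x, ‖w x‖ = 1 := fun x => norm_smul_inv_norm (𝕜 := ℝ) (hv0 x)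
  let J : sphere (0 : Fin (k + 1) → ℝ) 1 → Finset ι := fun x => Finset.univ.filter fun c => v x c ≠ 0
  have hJV : ∀ x, ∀ c ∈ J x, x ∈ V c := fun x c hc => hvV x c (by simpa [J] using hc)
  have hJinj : ∀ x, InjOn lev (J x : Set ι) := fun x c hc c' hc' h =>
    hVd c c' x h (hJV x c hc) (hJV x c' hc')
  have hJcl : ∀ x, ∀ c ∈ J x, x ∈ closure (V c) := fun x c hc => subset_closure (hJV x c hc)
  have hwJ : ∀ x, w x ∈ cub (J x) := by
    intro x
    refine ⟨fun c => ⟨?_, ?_⟩, fun c hc => ?_⟩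
    · exact mul_nonneg (inv_nonneg.2 (norm_nonneg _)) (ρ.nonneg c x)
    · have := norm_le_pi_norm (w x) c
      rw [hwn] at this
      exact (le_abs_self _).trans this
    · have : v x c = 0 := by simpa [J] using hc
      simp [w, this]
  refine ⟨fun x => F (w x), hFc.comp_continuous hwc fun x =>
    ⟨J x, ⟨hJinj x, x, hJcl x⟩, hwJ x, hwn x⟩, fun x => ?_⟩
  have h1 := hFφ (J x) (hJinj x) x (hJcl x) (w x) (hwJ x) (hwn x)
  have h2 := Finset.card_le_card_of_injOn (t := Finset.univ) lev (by simp) (hJinj x)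
  simp at h2
  exact hmono x (by omega) h1


lemma EmbedK.subset {Y : Type*} [TopologicalSpace Y] {i : ℕ} {A B : Set Y}
    (h : EmbedK i A B) : A ⊆ B := by
  intro a ha
  obtain ⟨f, -, hf, he⟩ := h (fun _ => a) continuous_const (fun _ => ha)
  have e := he ⟨EuclideanSpace.single 0 1, by simp⟩
  rw [← e]
  exact hf _

/-- Radial projection to the unit sphere. -/
noncomputable def nrm {V : Type*} [NormedAddCommGroup V] [NormedSpace ℝ V] (v : V) (hv : v ≠ 0) :
    sphere (0 : V) 1 :=
  ⟨‖v‖⁻¹ • v, by rw [mem_sphere_zero_iff_norm]; exact norm_smul_inv_norm (𝕜 := ℝ) hv⟩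

lemma nrm_cont {X V : Type*} [TopologicalSpace X] [NormedAddCommGroup V] [NormedSpace ℝ V]
    (f : X → V) (hf : Continuous f) (h0 : ∀ x, f x ≠ 0) :
    Continuous fun x => nrm (f x) (h0 x) :=
  Continuous.subtype_mk ((hf.norm.inv₀ fun x => norm_ne_zero_iff.2 (h0 x)).smul hf) _

lemma nrm_smul {V : Type*} [NormedAddCommGroup V] [NormedSpace ℝ V] (p : sphere (0 : V) 1)
    (c : ℝ) (hc : 0 < c) (v : V) (hv : v = c • p.1) (h0 : v ≠ 0) : nrm v h0 = p := by
  apply Subtype.ext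
  subst hv
  have hp : ‖p.1‖ = 1 := by simp
  simp only [nrm, norm_smul, hp, mul_one, Real.norm_eq_abs, abs_of_pos hc, smul_smul]
  rw [inv_mul_cancel₀ hc.ne', one_smul]

lemma sph_ne {V : Type*} [NormedAddCommGroup V] (p : sphere (0 : V) 1) : p.1 ≠ 0 := by
  intro h
  have hp : ‖p.1‖ = 1 := mem_sphere_zero_iff_norm.1 p.2
  rw [h] at hp
  simp at hp

/-- Transfer of a near-selection: if `g` is `ε`-close to a map `f` into `S`, extend. -/
lemma final_ext {E : Type*} [NormedAddCommGroup E] [NormedSpace ℝ E] (k : ℕ)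
    (S T : Set E) (hST : S ⊆ T) (hSkT : EmbedK k S T) (ε : ℝ) (hε : 0 < ε)
    (g f : sphere (0 : EuclideanSpace ℝ (Fin (k + 1))) 1 → E) (hg : Continuous g)
    (hf : Continuous f) (hfS : ∀ p, f p ∈ S) (hd : ∀ p, dist (f p) (g p) < ε) :
    ∃ h : closedBall (0 : EuclideanSpace ℝ (Fin (k + 1))) 1 → E,
        Continuous h ∧ (∀ p, h p ∈ ONbhd ε T) ∧
          ∀ p : sphere (0 : EuclideanSpace ℝ (Fin (k + 1))) 1,
            h ⟨p.1, sphere_subset_closedBall p.2⟩ = g p := by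
  classical
  obtain ⟨h', hc, hT, he⟩ := hSkT f hf hfS
  have hmpos : ∀ v : EuclideanSpace ℝ (Fin (k + 1)), 0 < max ‖v‖ (1 / 2) := fun v =>
    lt_max_of_lt_right (by norm_num)
  let s : closedBall (0 : EuclideanSpace ℝ (Fin (k + 1))) 1 →
      closedBall (0 : EuclideanSpace ℝ (Fin (k + 1))) 1 := fun v =>
    ⟨(max ‖v.1‖ (1 / 2))⁻¹ • v.1, by
      rw [mem_closedBall_zero_iff, norm_smul, norm_inv, Real.norm_eq_abs, abs_of_pos (hmpos _),
        inv_mul_le_iff₀ (hmpos _), mul_one]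
      exact le_max_left _ _⟩
  have hs : Continuous s := by
    have c1 : Continuous fun v : closedBall (0 : EuclideanSpace ℝ (Fin (k + 1))) 1 =>
        max ‖v.1‖ (1 / 2) := (continuous_subtype_val.norm).max continuous_const
    have c2 : Continuous fun v : closedBall (0 : EuclideanSpace ℝ (Fin (k + 1))) 1 =>
        (max ‖v.1‖ (1 / 2))⁻¹ := c1.inv₀ fun v => (hmpos v.1).ne'
    have c3 : Continuous fun v : closedBall (0 : EuclideanSpace ℝ (Fin (k + 1))) 1 =>
        (max ‖v.1‖ (1 / 2))⁻¹ • v.1 := c2.smul continuous_subtype_val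
    exact c3.subtype_mk _
  let D : EuclideanSpace ℝ (Fin (k + 1)) → E := fun v =>
    if hv : v ≠ 0 then g (nrm v hv) - f (nrm v hv) else 0
  have hDc : ∀ v, v ≠ 0 → ContinuousAt D v := by
    have : ContinuousOn D {v | v ≠ 0} := by
      rw [continuousOn_iff_continuous_domRestrict]
      have e : domRestrict {v | v ≠ 0} D = fun v : {v : EuclideanSpace ℝ (Fin (k + 1)) | v ≠ 0} =>
          g (nrm v.1 v.2) - f (nrm v.1 v.2) := by
        funext v
        have hv : v.1 ≠ 0 := v.2
        simp [D, domRestrict, hv]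
      rw [e]
      have := nrm_cont (fun v : {v : EuclideanSpace ℝ (Fin (k + 1)) | v ≠ 0} => v.1)
        continuous_subtype_val (fun v => v.2)
      exact (hg.comp this).sub (hf.comp this)
    intro v hv
    exact this.continuousAt (isOpen_ne.mem_nhds hv)
  let c : EuclideanSpace ℝ (Fin (k + 1)) → ℝ := fun v => max (2 * ‖v‖ - 1) 0
  have hcc : Continuous c := by fun_prop
  have hcD : Continuous fun v => c v • D v := by
    rw [continuous_iff_continuousAt]
    intro v
    by_cases hv : v = 0
    · have : (fun v => c v • D v) =ᶠ[nhds v] fun _ => 0 := by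
        subst hv
        filter_upwards [ball_mem_nhds (0 : EuclideanSpace ℝ (Fin (k + 1)))
          (show (0 : ℝ) < 1 / 2 by norm_num)] with w hw
        rw [mem_ball_zero_iff] at hw
        have : c w = 0 := max_eq_right (by linarith)
        rw [this, zero_smul]
      exact this.continuousAt
    · exact hcc.continuousAt.smul (hDc v hv)
  refine ⟨fun v => h' (s v) + c v.1 • D v.1,
    (hc.comp hs).add (hcD.comp continuous_subtype_val), fun v => ?_, fun p => ?_⟩
  · have hv1 : ‖v.1‖ ≤ 1 := mem_closedBall_zero_iff.1 v.2
    rcases le_or_gt ‖v.1‖ (1 / 2) with h | h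
    · have : c v.1 = 0 := max_eq_right (by linarith)
      simp only [this, zero_smul, add_zero]
      exact mem_iUnion₂.2 ⟨_, hT (s v), mem_ball_self hε⟩
    · have hv0 : v.1 ≠ 0 := by
        intro h0
        rw [h0, norm_zero] at h
        norm_num at h
      have e1 : h' (s v) = f (nrm v.1 hv0) := by
        rw [← he]
        congr 1
        apply Subtype.ext
        simp only [s, nrm, max_eq_left h.le]
      have e2 : D v.1 = g (nrm v.1 hv0) - f (nrm v.1 hv0) := by simp [D, hv0]
      refine mem_iUnion₂.2 ⟨_, hT (s v), ?_⟩
      have h3 := hd (nrm v.1 hv0)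
      rw [dist_comm, dist_eq_norm] at h3
      rw [mem_ball, dist_eq_norm, add_sub_cancel_left, e2, norm_smul, Real.norm_eq_abs,
        abs_of_nonneg (le_max_right _ _)]
      have c1 : c v.1 ≤ 1 := max_le (by linarith) zero_le_one
      calc c v.1 * _ ≤ 1 * _ := mul_le_mul_of_nonneg_right c1 (norm_nonneg _)
        _ < ε := by rwa [one_mul]
  · have hp : ‖p.1‖ = 1 := mem_sphere_zero_iff_norm.1 p.2
    have hp0 := sph_ne p
    have hn : nrm p.1 hp0 = p := nrm_smul p 1 one_pos _ (one_smul _ _).symm _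
    have e1 : h' (s ⟨p.1, sphere_subset_closedBall p.2⟩) = f p := by
      rw [← he]
      congr 1
      apply Subtype.ext
      simp only [s]
      rw [hp, max_eq_left (by norm_num), inv_one, one_smul]
    have e2 : D p.1 = g p - f p := by
      simp only [D, dif_pos hp0, hn]
    have e3 : c p.1 = 1 := by
      simp only [c, hp]
      norm_num
    simp only [e1, e2, e3, one_smul]
    abel


/-- Corollary 4.4. -/
theorem embed_of_neighbourhoods
    {E : Type*} [NormedAddCommGroup E] [NormedSpace ℝ E]
    (k : ℕ) (δ : ℝ → ℝ) (hδpos : ∀ ε > 0, 0 < δ ε)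
    (S T : Set E) (hS : S.Nonempty) (hST : S ⊆ T)
    (hSkT : EmbedK k S T)
    (hLC : ∀ y : E, ∀ ε > (0 : ℝ), ∀ i < k, EmbedK i (ball y (δ ε) ∩ S) (ball y ε ∩ S)) :
    ∀ ε > (0 : ℝ), EmbedK k (ONbhd (δ^[k] ε) S) (ONbhd ε T) := by
  intro ε hε g hg hgS
  have hpos : ∀ n, 0 < δ^[n] ε := by
    intro n
    induction n with
    | zero => exact hε
    | succ n ih => rw [Function.iterate_succ_apply']; exact hδpos _ ih
  have hne0 : ∀ x : sphere (0 : Fin (k + 1) → ℝ) 1,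
      (WithLp.toLp 2 x.1 : EuclideanSpace ℝ (Fin (k + 1))) ≠ 0 := by
    intro x h
    exact sph_ne x (by simpa using h)
  have hne1 : ∀ p : sphere (0 : EuclideanSpace ℝ (Fin (k + 1))) 1, WithLp.ofLp p.1 ≠ 0 := by
    intro p h
    exact sph_ne p (by simpa using h)
  let G : sphere (0 : Fin (k + 1) → ℝ) 1 → E := fun x => g (nrm (WithLp.toLp 2 x.1) (hne0 x))
  have hG : Continuous G := hg.comp (nrm_cont
    (fun x : sphere (0 : Fin (k + 1) → ℝ) 1 => (WithLp.toLp 2 x.1 : EuclideanSpace ℝ (Fin (k + 1))))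
    ((PiLp.continuous_toLp 2 _).comp continuous_subtype_val) hne0)
  let r : sphere (0 : EuclideanSpace ℝ (Fin (k + 1))) 1 → sphere (0 : Fin (k + 1) → ℝ) 1 :=
    fun p => nrm (WithLp.ofLp p.1) (hne1 p)
  have hr : Continuous r := nrm_cont
    (fun p : sphere (0 : EuclideanSpace ℝ (Fin (k + 1))) 1 => WithLp.ofLp p.1)
    ((PiLp.continuous_ofLp 2 _).comp continuous_subtype_val) hne1
  have hGr : ∀ p, G (r p) = g p := by
    intro p
    refine congrArg g (nrm_smul p ‖WithLp.ofLp p.1‖⁻¹ (inv_pos.2 (norm_pos_iff.2 (hne1 p))) _ ?_ _)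
    rfl
  let φ : ℕ → sphere (0 : Fin (k + 1) → ℝ) 1 → Set E := fun i x =>
    ball (G x) (δ^[k - i] ε) ∩ S
  have hE : ∀ x, ∀ i < k, EmbedK i (φ i x) (φ (i + 1) x) := by
    intro x i hi
    have := hLC (G x) _ (hpos (k - (i + 1))) i hi
    rw [← Function.iterate_succ_apply' δ, show (k - (i + 1)).succ = k - i by omega] at this
    exact this
  obtain ⟨f, hf, hfφ⟩ := selection k φ
    (by
      intro x
      refine monotone_nat_of_le_succ fun i => ?_
      by_cases hi : i < k
      · exact (hE x i hi).subset
      · simp only [φ]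
        rw [show k - i = k - (i + 1) by omega])
    (by
      intro x
      obtain ⟨y, hy, hy'⟩ := mem_iUnion₂.1 (hgS (nrm (WithLp.toLp 2 x.1) (hne0 x)))
      exact ⟨y, mem_ball_comm.1 hy', hy⟩)
    hE
    (by
      intro i x K hK hKφ
      have : ∀ᶠ x' in nhds x, ∀ z ∈ K, dist z (G x') < δ^[k - i] ε := by
        refine hK.eventually_forall_of_forall_eventually fun z hz => ?_
        exact (continuous_snd.dist (hG.comp continuous_fst)).continuousAt.eventually_lt
          continuousAt_const (hKφ hz).1
      filter_upwards [this] with x' hx' z hz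
      exact ⟨hx' z hz, (hKφ hz).2⟩)
  refine final_ext k S T hST hSkT ε hε g (fun p => f (r p)) hg (hf.comp hr)
    (fun p => (hfφ (r p)).2) fun p => ?_
  have := (hfφ (r p)).1
  rw [hGr, Nat.sub_self, mem_ball] at this
  exact this
end

section
/- Let E be a real normed space, let k ≥ 0, let δ : (0,∞) → (0,∞) be a function with iterates δ_m, and let S, T be subsets of E with ∅ ≠ S ⊆ T such that O_{δ(ε)}(y) ∩ T ↪_k O_ε(y) ∩ T for every y ∈ E and ε > 0, and O_{δ(ε)}(y) ∩ S ↪_i O_ε(y) ∩ S for every y ∈ E, ε > 0 and 0 ≤ i < k. Define η(ε) = δ(ε)/2 and λ(ε,μ) = δ_k(min{η(ε), μ}) for ε, μ > 0. Then O_{η(ε)}(y) ∩ O_{λ(ε,μ)}(S) ↪_k O_ε(y) ∩ O_μ(T) for every y ∈ E and all ε, μ > 0. -/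
open Metric Set

namespace Emb
variable {n : ℕ}

def cell (D : Finset (Fin n)) : Set (Fin n → ℝ) :=
  {t | ∀ j, (j ∈ D → 0 ≤ t j ∧ t j ≤ 1) ∧ (j ∉ D → t j = 0)}

noncomputable def nd (t : Fin n → ℝ) : Finset (Fin n) :=
  Finset.univ.filter (fun j => Int.fract (t j) ≠ 0)

noncomputable def fl (t : Fin n → ℝ) : Fin n → ℤ := fun j => ⌊t j⌋
noncomputable def fr (t : Fin n → ℝ) : Fin n → ℝ := fun j => Int.fract (t j)
def zc (v : Fin n → ℤ) : Fin n → ℝ := fun j => (v j : ℝ)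
def bd (D : Finset (Fin n)) : Set (Fin n → ℝ) := {t | t ∈ cell D ∧ (nd t).card < D.card}

lemma zc_add (v w : Fin n → ℤ) : zc (v + w) = zc v + zc w := by
  ext j; simp [zc]

lemma fl_fr (t : Fin n → ℝ) : zc (fl t) + fr t = t := by
  ext j; simp [zc, fl, fr]

lemma fl_add (v : Fin n → ℤ) (t) : fl (zc v + t) = v + fl t := by
  ext j; simp [zc, fl]

lemma fr_add (v : Fin n → ℤ) (t) : fr (zc v + t) = fr t := by
  ext j; simp [zc, fr]

lemma nd_add (v : Fin n → ℤ) (t) : nd (zc v + t) = nd t := by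
  ext j; simp [zc, nd]

lemma fr_mem_cell (t : Fin n → ℝ) : fr t ∈ cell (nd t) := by
  intro j
  refine ⟨fun _ => ⟨Int.fract_nonneg _, (Int.fract_lt_one _).le⟩, fun h => ?_⟩
  simpa [nd, fr] using h

lemma cell_mono {D D' : Finset (Fin n)} (h : D ⊆ D') : cell D ⊆ cell D' := by
  intro t ht j
  by_cases hj : j ∈ D
  · exact ⟨fun _ => (ht j).1 hj, fun h' => absurd (h hj) h'⟩
  · have := (ht j).2 hj
    exact ⟨fun _ => by rw [this]; norm_num, fun _ => this⟩

lemma cell_subset_univ (D : Finset (Fin n)) : cell D ⊆ cell Finset.univ :=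
  cell_mono (Finset.subset_univ D)

lemma isClosed_cell (D : Finset (Fin n)) : IsClosed (cell D) := by
  have : cell D = ⋂ j, {t : Fin n → ℝ | (j ∈ D → 0 ≤ t j ∧ t j ≤ 1) ∧ (j ∉ D → t j = 0)} := by
    ext t; simp [cell]
  rw [this]
  refine isClosed_iInter fun j => ?_
  by_cases hj : j ∈ D
  · simp only [hj, true_imp_iff, not_true_eq_false, false_imp_iff, and_true]
    exact (isClosed_le continuous_const (continuous_apply j)).inter
      (isClosed_le (continuous_apply j) continuous_const)
  · simp only [hj, true_imp_iff, not_false_eq_true, false_imp_iff, true_and]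
    exact isClosed_eq (continuous_apply j) continuous_const

lemma isCompact_cell (D : Finset (Fin n)) : IsCompact (cell D) := by
  refine (isCompact_univ_pi (fun _ => isCompact_Icc (a := (0:ℝ)) (b := 1))).of_isClosed_subset
    (isClosed_cell D) ?_
  intro t ht j _
  exact ((cell_subset_univ D ht) j).1 (Finset.mem_univ j)

lemma nd_subset {D : Finset (Fin n)} {t} (ht : t ∈ cell D) : nd t ⊆ D := by
  intro j hj
  by_contra h
  have := (ht j).2 h
  simp [nd, this] at hj

lemma fl_mem {t : Fin n → ℝ} (ht : t ∈ cell Finset.univ) : fl t ∈ Icc (0 : Fin n → ℤ) 1 := by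
  refine ⟨fun j => ?_, fun j => ?_⟩
  · exact Int.floor_nonneg.2 ((ht j).1 (Finset.mem_univ j)).1
  · have := ((ht j).1 (Finset.mem_univ j)).2
    have h2 : ⌊t j⌋ ≤ ⌊(1:ℝ)⌋ := Int.floor_le_floor this
    simpa [fl] using h2

/-- interior points of a cell -/
lemma fl_eq_zero {D : Finset (Fin n)} {t} (ht : t ∈ cell D) (h : ¬ (nd t).card < D.card) :
    nd t = D ∧ fl t = 0 ∧ fr t = t := by
  have h1 : nd t = D := Finset.eq_of_subset_of_card_le (nd_subset ht) (not_lt.1 h)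
  have h2 : fl t = 0 := by
    ext j
    by_cases hj : j ∈ D
    · have h3 := (ht j).1 hj
      have h4 : j ∈ nd t := h1 ▸ hj
      simp only [nd, Finset.mem_filter, Finset.mem_univ, true_and] at h4
      have h5 : t j ≠ 1 := by
        intro h; rw [h] at h4; simp at h4
      simp only [fl, Pi.zero_apply]
      rw [Int.floor_eq_zero_iff]
      exact ⟨h3.1, lt_of_le_of_ne h3.2 h5⟩
    · simp [fl, (ht j).2 hj]
  refine ⟨h1, h2, ?_⟩
  have := fl_fr t
  rw [h2] at this
  rw [← this, fr_add, ]
  have : zc (0 : Fin n → ℤ) = 0 := by ext; simp [zc]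
  rw [this]
  simp
  ext j; simp [fr]

lemma continuousOn_of_cells {E : Type*} [TopologicalSpace E] (f : (Fin n → ℝ) → E)
    (W : Set (Fin n → ℝ)) (V : Set (Fin n → ℤ)) (hV : V.Finite) (m : ℕ)
    (hc : ∀ v ∈ V, ∀ D : Finset (Fin n), D.card < m → ContinuousOn (fun t => f (zc v + t)) (cell D))
    (hW : ∀ x ∈ W, fl x ∈ V ∧ (nd x).card < m) : ContinuousOn f W := by
  have : Finite V := hV
  let I := V × {D : Finset (Fin n) // D.card < m}
  let F : I → Set (Fin n → ℝ) := fun p => (fun x => x - zc p.1.1) ⁻¹' cell p.2.1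
  have hF : ∀ p, IsClosed (F p) := fun p =>
    (isClosed_cell _).preimage (by fun_prop)
  have key : ContinuousOn f (⋃ p, F p) := by
    refine (locallyFinite_of_finite F).continuousOn_iUnion hF ?_
    intro p
    have := (hc p.1.1 p.1.2 p.2.1 p.2.2).comp (f := fun x => x - zc p.1.1) (s := F p)
      (by fun_prop) (fun x hx => hx)
    refine this.congr ?_
    intro x _
    simp
  refine key.mono ?_
  intro x hx
  obtain ⟨h1, h2⟩ := hW x hx
  refine mem_iUnion.2 ⟨(⟨fl x, h1⟩, ⟨nd x, h2⟩), ?_⟩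
  have h3 : x - zc (fl x) = fr x := by
    rw [sub_eq_iff_eq_add', fl_fr]
  change x - zc (fl x) ∈ cell (nd x)
  rw [h3]; exact fr_mem_cell x

end Emb
namespace Emb

def Fill (n : ℕ) {E : Type*} [PseudoMetricSpace E] (S K : Set E) (r rout : ℝ) (i : ℕ) : Prop :=
  ∀ D : Finset (Fin n), D.card = i → ∀ u : (Fin n → ℝ) → E, ContinuousOn u (bd D) →
    ∀ z ∈ K, (∀ t ∈ bd D, u t ∈ S ∧ dist (u t) z < r) →
      ∃ φ : (Fin n → ℝ) → E, ContinuousOn φ (cell D) ∧ EqOn φ u (bd D) ∧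
        ∀ t ∈ cell D, φ t ∈ S ∧ (dist (φ t) z < rout)

/-- The map `φ` is a filling of `u` over `D` centred at `z` with radius `r`. -/
def IsFilling {n : ℕ} {E : Type*} [PseudoMetricSpace E] (S : Set E) (D : Finset (Fin n))
    (u : (Fin n → ℝ) → E) (z : E) (r : ℝ) (φ : (Fin n → ℝ) → E) : Prop :=
  ContinuousOn φ (cell D) ∧ EqOn φ u (bd D) ∧ ∀ t ∈ cell D, φ t ∈ S ∧ dist (φ t) z ≤ r

lemma fill_finite {n : ℕ} {E : Type*} [PseudoMetricSpace E] {S K : Set E} (hK : IsCompact K)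
    {r r' : ℝ} {i : ℕ} (hF : Fill n S K r r' i) {ρ : ℝ} (hρ : 0 < ρ)
    (D : Finset (Fin n)) (hD : D.card = i) (u : (Fin n → ℝ) → E) :
    ∃ 𝓤 : Set ((Fin n → ℝ) → E), 𝓤.Finite ∧ ∃ ρ' > 0, ∀ z ∈ K, ContinuousOn u (bd D) →
      (∀ t ∈ bd D, u t ∈ S ∧ dist (u t) z ≤ r - ρ) →
      ∃ φ ∈ 𝓤, IsFilling S D u z (r' - ρ') φ := by
  by_cases hu : ContinuousOn u (bd D) ∧ ∀ t ∈ bd D, u t ∈ S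
  swap
  · refine ⟨∅, finite_empty, 1, one_pos, fun z _ h1 h2 => ?_⟩
    exact absurd ⟨h1, fun t ht => (h2 t ht).1⟩ hu
  obtain ⟨hu1, hu2⟩ := hu
  let C : Set E := K ∩ {z | ∀ t ∈ bd D, dist (u t) z ≤ r - ρ}
  have hC : IsCompact C := by
    refine hK.inter_right ?_
    have : {z | ∀ t ∈ bd D, dist (u t) z ≤ r - ρ} =
        ⋂ t ∈ bd D, {z | dist (u t) z ≤ r - ρ} := by
      ext z; simp
    rw [this]
    exact isClosed_biInter fun t _ => isClosed_le (by fun_prop) continuous_const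
  suffices h : ∃ 𝓤 : Set ((Fin n → ℝ) → E), 𝓤.Finite ∧ ∃ ρ' > 0, ∀ z ∈ C,
      ∃ φ ∈ 𝓤, IsFilling S D u z (r' - ρ') φ by
    obtain ⟨𝓤, h1, ρ', h2, h3⟩ := h
    exact ⟨𝓤, h1, ρ', h2, fun z hz _ h5 => h3 z ⟨hz, fun t ht => (h5 t ht).2⟩⟩
  refine hC.induction_on (p := fun C => ∃ 𝓤 : Set ((Fin n → ℝ) → E), 𝓤.Finite ∧ ∃ ρ' > 0, ∀ z ∈ C,
      ∃ φ ∈ 𝓤, IsFilling S D u z (r' - ρ') φ) ?_ ?_ ?_ ?_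
  · exact ⟨∅, finite_empty, 1, one_pos, by simp⟩
  · rintro s t hst ⟨𝓤, h1, ρ', h2, h3⟩
    exact ⟨𝓤, h1, ρ', h2, fun z hz => h3 z (hst hz)⟩
  · rintro s t ⟨𝓤, h1, ρ', h2, h3⟩ ⟨𝓤', h1', ρ'', h2', h3'⟩
    refine ⟨𝓤 ∪ 𝓤', h1.union h1', min ρ' ρ'', lt_min h2 h2', ?_⟩
    rintro z (hz | hz)
    · obtain ⟨φ, hφ, a, b, c⟩ := h3 z hz
      exact ⟨φ, Or.inl hφ, a, b, fun t ht => ⟨(c t ht).1, (c t ht).2.trans (by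
        have := min_le_left ρ' ρ''; linarith)⟩⟩
    · obtain ⟨φ, hφ, a, b, c⟩ := h3' z hz
      exact ⟨φ, Or.inr hφ, a, b, fun t ht => ⟨(c t ht).1, (c t ht).2.trans (by
        have := min_le_right ρ' ρ''; linarith)⟩⟩
  · intro z hz
    obtain ⟨φ, a, b, c⟩ := hF D hD u hu1 z hz.1
      (fun t ht => ⟨hu2 t ht, (hz.2 t ht).trans_lt (by linarith)⟩)
    have hne : (cell D).Nonempty := ⟨0, fun j => by simp⟩
    obtain ⟨t0, ht0, hmax⟩ := (isCompact_cell D).exists_isMaxOn hne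
      (f := fun t => dist (φ t) z) ((continuous_id.dist continuous_const).comp_continuousOn a)
    have hlt := (c t0 ht0).2
    set e := (r' - dist (φ t0) z) / 2 with he
    have hepos : 0 < e := by rw [he]; linarith
    refine ⟨ball z e, mem_nhdsWithin_of_mem_nhds (ball_mem_nhds z hepos), {φ}, finite_singleton _,
      e, hepos, fun z' hz' => ⟨φ, rfl, a, b, fun t ht => ⟨(c t ht).1, ?_⟩⟩⟩
    have h1 : dist (φ t) z ≤ dist (φ t0) z := hmax ht
    have h2 := dist_triangle_right (φ t) z' z
    have h3 : dist z' z < e := hz'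
    linarith [dist_triangle (φ t) z z', dist_comm z z']

lemma exists_pos_le {ι : Type*} [Finite ι] (ρ : ι → ℝ) (h : ∀ i, 0 < ρ i) :
    ∃ e > 0, ∀ i, e ≤ ρ i := by
  rcases isEmpty_or_nonempty ι with hι | hι
  · exact ⟨1, one_pos, fun i => hι.elim i⟩
  · obtain ⟨i, hi⟩ := Finite.exists_min ρ
    exact ⟨ρ i, h i, hi⟩

/-- one step of the construction, over all patterns. -/
lemma fill_finite_all {n : ℕ} {E : Type*} [PseudoMetricSpace E] {S K : Set E} (hK : IsCompact K)
    {r r' : ℝ} {i : ℕ} (hF : Fill n S K r r' i) {ρ : ℝ} (hρ : 0 < ρ)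
    (𝓕 : Set ((Fin n → ℝ) → E)) (h𝓕 : 𝓕.Finite) :
    ∃ 𝓤 : Set ((Fin n → ℝ) → E), 𝓤.Finite ∧ ∃ ρ' > 0, ∀ D : Finset (Fin n), D.card = i →
      ∀ u ∈ 𝓕, ∀ z ∈ K, ContinuousOn u (bd D) →
      (∀ t ∈ bd D, u t ∈ S ∧ dist (u t) z ≤ r - ρ) →
      ∃ φ ∈ 𝓤, IsFilling S D u z (r' - ρ') φ := by
  have : Finite 𝓕 := h𝓕
  choose 𝓤 h1 ρ' h2 h3 using fun p : {D : Finset (Fin n) // D.card = i} × 𝓕 =>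
    fill_finite hK hF hρ p.1.1 p.1.2 p.2.1
  obtain ⟨e, he, hle⟩ := exists_pos_le ρ' h2
  refine ⟨⋃ p, 𝓤 p, finite_iUnion h1, e, he, fun D hD u hu z hz hc hb => ?_⟩
  obtain ⟨φ, hφ, a, b, c⟩ := h3 (⟨D, hD⟩, ⟨u, hu⟩) z hz hc hb
  exact ⟨φ, mem_iUnion.2 ⟨_, hφ⟩, a, b, fun t ht => ⟨(c t ht).1, (c t ht).2.trans (by
    linarith [hle (⟨D, hD⟩, ⟨u, hu⟩)])⟩⟩

/-- The state of the construction after filling in all cells of dimension `< m`. -/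
def State (n : ℕ) {E : Type*} [PseudoMetricSpace E] (S K : Set E) (r : ℝ) (m : ℕ) : Prop :=
  ∃ ρ > 0, ∃ 𝓕 : Set ((Fin n → ℝ) → E), 𝓕.Finite ∧
    ∀ (γ : (Fin n → ℤ) → E) (L : ℕ → Set (Fin n → ℤ)),
      (∀ m, ∀ v ∈ L m, γ v ∈ K) →
      (∀ m, ∀ v ∈ L (m + 1), ∀ a ∈ Icc v (v + 1), a ∈ L m ∧ dist (γ a) (γ v) < ρ) →
      ∃ f : (Fin n → ℝ) → E,
        (∀ v, ∃ u ∈ 𝓕, ∀ t ∈ cell Finset.univ, f (zc v + t) = u t) ∧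
        ∀ v ∈ L m, ∀ D : Finset (Fin n), D.card < m →
          ContinuousOn (fun t => f (zc v + t)) (cell D) ∧
          ∀ t ∈ cell D, f (zc v + t) ∈ S ∧ dist (f (zc v + t)) (γ v) ≤ r - ρ

lemma state_zero {n : ℕ} {E : Type*} [PseudoMetricSpace E] [Nonempty E] (S K : Set E) (r : ℝ) :
    State n S K r 0 := by
  let e : E := Classical.arbitrary E
  refine ⟨1, one_pos, {fun _ => e}, finite_singleton _, fun γ L _ _ => ⟨fun _ => e, ?_, ?_⟩⟩
  · exact fun v => ⟨_, rfl, fun _ _ => rfl⟩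
  · intro v _ D hD
    exact absurd hD (Nat.not_lt_zero _)

lemma state_succ {n : ℕ} {E : Type*} [PseudoMetricSpace E] [Nonempty E] {S K : Set E}
    (hK : IsCompact K)
    {r r' : ℝ} {m : ℕ} (hr : r ≤ r') (hF : Fill n S K r r' m) (h : State n S K r m) :
    State n S K r' (m + 1) := by
  classical
  obtain ⟨ρ, hρ, 𝓕, h𝓕, h⟩ := h
  obtain ⟨𝓤, h𝓤, ρ', hρ', hfill⟩ := fill_finite_all hK hF (half_pos hρ) 𝓕 h𝓕
  let e : (Fin n → ℝ) → E := fun _ => Classical.arbitrary E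
  let 𝓤' : Set ((Fin n → ℝ) → E) := insert e 𝓤
  have h𝓤' : 𝓤'.Finite := h𝓤.insert e
  have : Finite 𝓤' := h𝓤'
  have : Finite 𝓕 := h𝓕
  have : Finite (Icc (0 : Fin n → ℤ) 1) := (finite_Icc _ _)
  let Ψ : (𝓕 × (Icc (0 : Fin n → ℤ) 1 → Finset (Fin n) → 𝓤')) → (Fin n → ℝ) → E :=
    fun p t => if (nd t).card < m then p.1.1 t else
      if h : fl t ∈ Icc (0 : Fin n → ℤ) 1 then (p.2 ⟨fl t, h⟩ (nd t)).1 (fr t) else e t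
  refine ⟨min (ρ / 2) ρ', lt_min (half_pos hρ) hρ', range Ψ, finite_range Ψ, ?_⟩
  intro γ L hL1 hL2
  obtain ⟨f, hf1, hf2⟩ := h γ L hL1 (fun m v hv a ha => ⟨(hL2 m v hv a ha).1,
    (hL2 m v hv a ha).2.trans_le ((min_le_left _ _).trans (by linarith))⟩)
  choose u hu𝓕 hu using hf1
  -- choose the fillings
  have hφ : ∀ v (D : Finset (Fin n)), ∃ φ ∈ 𝓤', v ∈ L (m + 1) → D.card = m →
      IsFilling S D (u v) (γ v) (r' - ρ') φ := by
    intro v D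
    by_cases hv : v ∈ L (m + 1) ∧ D.card = m
    swap
    · exact ⟨e, mem_insert _ _, fun h1 h2 => absurd ⟨h1, h2⟩ hv⟩
    obtain ⟨hv, hD⟩ := hv
    have hsub : bd D ⊆ cell Finset.univ := fun t ht => cell_subset_univ D ht.1
    have hcont : ContinuousOn (fun t => f (zc v + t)) (bd D) := by
      refine continuousOn_of_cells _ _ (Icc 0 1) (finite_Icc _ _) m ?_ ?_
      · intro a ha D' hD'
        have hva : v + a ∈ L m := (hL2 m v hv (v + a)
          ⟨by simpa using ha.1, by simpa using ha.2⟩).1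
        have := (hf2 (v + a) hva D' hD').1
        simpa [zc_add, add_assoc] using this
      · intro t ht
        exact ⟨fl_mem (hsub ht), hD ▸ ht.2⟩
    obtain ⟨φ, hφ, hfil⟩ := hfill D hD (u v) (hu𝓕 v) (γ v) (hL1 _ v hv)
      (hcont.congr fun t ht => (hu v t (hsub ht)).symm) (by
        intro t ht
        rw [← hu v t (hsub ht)]
        have ha := fl_mem (hsub ht)
        have hva := hL2 m v hv (v + fl t) ⟨by simpa using ha.1, by simpa using ha.2⟩
        have := (hf2 (v + fl t) hva.1 (nd t) (hD ▸ ht.2)).2 (fr t) (fr_mem_cell t)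
        rw [zc_add, add_assoc, fl_fr] at this
        refine ⟨this.1, ?_⟩
        have h3 := dist_triangle (f (zc v + t)) (γ (v + fl t)) (γ v)
        have h4 := min_le_left (ρ / 2) ρ'
        linarith [this.2, hva.2])
    exact ⟨φ, mem_insert_of_mem _ hφ, fun _ _ => hfil⟩
  choose φ hφ𝓤 hφ using hφ
  let f' : (Fin n → ℝ) → E := fun x =>
    if (nd x).card < m then f x else φ (fl x) (nd x) (fr x)
  refine ⟨f', ?_, ?_⟩
  · intro v
    refine ⟨_, ⟨(⟨u v, hu𝓕 v⟩, fun a D => ⟨φ (v + a.1) D, hφ𝓤 _ _⟩), rfl⟩, ?_⟩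
    intro t ht
    have hflt := fl_mem ht
    simp only [f', Ψ, nd_add, fl_add, fr_add, hu v t ht, dif_pos hflt]
  · intro v hv D hD
    rcases Nat.lt_succ_iff_lt_or_eq.1 hD with hD | hD
    · have hvm : v ∈ L m := (hL2 m v hv v ⟨le_rfl, by simp⟩).1
      obtain ⟨h1, h2⟩ := hf2 v hvm D hD
      have heq : ∀ t ∈ cell D, f' (zc v + t) = f (zc v + t) := by
        intro t ht
        have : (nd t).card < m := (Finset.card_le_card (nd_subset ht)).trans_lt hD
        simp only [f', nd_add, if_pos this]
      refine ⟨h1.congr heq, fun t ht => ?_⟩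
      rw [heq t ht]
      refine ⟨(h2 t ht).1, (h2 t ht).2.trans ?_⟩
      have h4 := min_le_left (ρ / 2) ρ'
      linarith
    · obtain ⟨h1, h2, h3⟩ := hφ v D hv hD
      have heq : ∀ t ∈ cell D, f' (zc v + t) = φ v D t := by
        intro t ht
        by_cases hlt : (nd t).card < D.card
        · have : (nd t).card < m := hD ▸ hlt
          simp only [f', nd_add, if_pos this]
          rw [hu v t (cell_subset_univ D ht), h2 ⟨ht, hlt⟩]
        · obtain ⟨a, b, c⟩ := fl_eq_zero ht hlt
          have : ¬ D.card < m := by omega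
          simp only [f', nd_add, if_neg this, fl_add, fr_add, a, b, c, add_zero]
      refine ⟨h1.congr heq, fun t ht => ?_⟩
      rw [heq t ht]
      refine ⟨(h3 t ht).1, (h3 t ht).2.trans ?_⟩
      have h4 := min_le_right (ρ / 2) ρ'
      linarith

lemma state_all {n : ℕ} {E : Type*} [PseudoMetricSpace E] [Nonempty E] {S K : Set E}
    (hK : IsCompact K) (R : ℕ → ℝ) (m : ℕ) (hR : ∀ i < m, R i ≤ R (i + 1))
    (hF : ∀ i < m, Fill n S K (R i) (R (i + 1)) i) : State n S K (R m) m := by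
  induction m with
  | zero => exact state_zero S K _
  | succ m ih =>
    exact state_succ hK (hR m m.lt_succ_self) (hF m m.lt_succ_self)
      (ih (fun i hi => hR i (hi.trans m.lt_succ_self)) (fun i hi => hF i (hi.trans m.lt_succ_self)))

end Emb
namespace Emb

lemma cube_homeo (m : ℕ) : ∃ e : EuclideanSpace ℝ (Fin m) ≃ₜ EuclideanSpace ℝ (Fin m),
    (∀ x, (∀ i, 0 ≤ x i ∧ x i ≤ 1) ↔ e x ∈ closedBall (0 : EuclideanSpace ℝ (Fin m)) 1) ∧
    (∀ x, ((∀ i, 0 ≤ x i ∧ x i ≤ 1) ∧ ∃ i, x i = 0 ∨ x i = 1) ↔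
      e x ∈ sphere (0 : EuclideanSpace ℝ (Fin m)) 1) := by
  let H : EuclideanSpace ℝ (Fin m) ≃L[ℝ] (Fin m → ℝ) := EuclideanSpace.equiv (Fin m) ℝ
  let s : Set (EuclideanSpace ℝ (Fin m)) := H ⁻¹' (Set.pi univ fun _ => Icc (0:ℝ) 1)
  have hs : ∀ x, x ∈ s ↔ ∀ i, 0 ≤ x i ∧ x i ≤ 1 := by
    intro x
    exact ⟨fun h i => h i (mem_univ i), fun h i _ => h i⟩
  have hint : interior s = H ⁻¹' (Set.pi univ fun _ => Ioo (0:ℝ) 1) := by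
    have := H.toHomeomorph.preimage_interior (Set.pi univ fun _ => Icc (0:ℝ) 1)
    rw [interior_pi_set finite_univ] at this
    simp only [interior_Icc] at this
    exact this.symm
  have hcl : IsClosed s :=
    (isClosed_set_pi fun _ _ => isClosed_Icc).preimage H.continuous
  have hconv : Convex ℝ s :=
    (convex_pi fun _ _ => convex_Icc (0:ℝ) 1).linear_preimage (H : EuclideanSpace ℝ (Fin m) →ₗ[ℝ] (Fin m → ℝ))
  have hne : (interior s).Nonempty := by
    rw [hint]
    refine ⟨H.symm fun _ => 1/2, ?_⟩
    rw [mem_preimage, H.apply_symm_apply]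
    intro i _
    constructor <;> norm_num
  have hcomp : IsCompact s := by
    have := (isCompact_univ_pi (fun _ : Fin m => isCompact_Icc (a := (0:ℝ)) (b := 1))).image
      H.symm.continuous
    convert this using 1
    exact (H.symm.image_eq_preimage_symm _).symm
  obtain ⟨e, _, h2, h3⟩ :=
    exists_homeomorph_image_interior_closure_frontier_eq_unitBall hconv hne hcomp.isBounded
  rw [hcl.closure_eq] at h2
  rw [hcl.frontier_eq] at h3
  refine ⟨e, fun x => ?_, fun x => ?_⟩
  · rw [← h2, e.injective.mem_set_image, hs]
  · rw [← h3, e.injective.mem_set_image, mem_sdiff, hs, hint]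
    refine and_congr_right fun hx => ?_
    rw [mem_preimage, Set.mem_pi]
    push Not
    constructor
    · rintro ⟨i, hi⟩
      refine ⟨i, mem_univ _, fun h => ?_⟩
      have h1 : 0 < x i := h.1
      have h2 : x i < 1 := h.2
      rcases hi with hi | hi <;> linarith
    · rintro ⟨i, _, hi⟩
      refine ⟨i, ?_⟩
      by_contra hcon
      push Not at hcon
      exact hi ⟨lt_of_le_of_ne (hx i).1 (Ne.symm hcon.1), lt_of_le_of_ne (hx i).2 hcon.2⟩

lemma mem_bd_iff {n : ℕ} (D : Finset (Fin n)) (t : Fin n → ℝ) :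
    t ∈ bd D ↔ t ∈ cell D ∧ ∃ j ∈ D, t j = 0 ∨ t j = 1 := by
  refine and_congr_right fun ht => ?_
  constructor
  · intro h
    obtain ⟨j, hj, hj2⟩ := Finset.exists_mem_notMem_of_card_lt_card h
    refine ⟨j, hj, ?_⟩
    simp only [nd, Finset.mem_filter, Finset.mem_univ, true_and, not_not] at hj2
    have h1 := (ht j).1 hj
    by_contra hcon
    push Not at hcon
    have h3 : Int.fract (t j) = t j :=
      Int.fract_eq_self.2 ⟨h1.1, lt_of_le_of_ne h1.2 hcon.2⟩
    exact hcon.1 (h3 ▸ hj2)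
  · rintro ⟨j, hj, hj2⟩
    refine Finset.card_lt_card ⟨nd_subset ht, fun hsub => ?_⟩
    have := hsub hj
    simp only [nd, Finset.mem_filter, Finset.mem_univ, true_and] at this
    rcases hj2 with h | h <;> simp [h] at this

lemma fill_of_embed {n : ℕ} {E : Type*} [PseudoMetricSpace E] {S K : Set E} {r r' : ℝ} {j : ℕ}
    (h : ∀ y : E, EmbedK j (ball y r ∩ S) (ball y r' ∩ S)) : Fill n S K r r' (j + 1) := by
  intro D hD u hu z _ hub
  obtain ⟨e, he1, he2⟩ := cube_homeo (j + 1)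
  let ι : D ≃ Fin (j + 1) := D.equivFinOfCardEq hD
  let α : EuclideanSpace ℝ (Fin (j + 1)) → (Fin n → ℝ) :=
    fun p q => if h : q ∈ D then e.symm p (ι ⟨q, h⟩) else 0
  let β : (Fin n → ℝ) → EuclideanSpace ℝ (Fin (j + 1)) :=
    fun t => e (WithLp.toLp 2 fun i => t (ι.symm i).1)
  have hα : Continuous α := by
    refine continuous_pi fun q => ?_
    by_cases hq : q ∈ D
    · simp only [α, dif_pos hq]
      fun_prop
    · simp only [α, dif_neg hq]
      exact continuous_const
  have hβ : Continuous β := by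
    refine e.continuous.comp ?_
    fun_prop
  have hαβ : ∀ t ∈ cell D, α (β t) = t := by
    intro t ht
    ext q
    by_cases hq : q ∈ D
    · simp [α, β, hq]
    · simp [α, hq, (ht q).2 hq]
  have hα1 : ∀ p ∈ closedBall (0 : EuclideanSpace ℝ (Fin (j + 1))) 1, α p ∈ cell D := by
    intro p hp q
    have := (he1 (e.symm p)).2 (by simpa using hp)
    refine ⟨fun hq => ?_, fun hq => ?_⟩
    · simpa only [α, dif_pos hq] using this (ι ⟨q, hq⟩)
    · simp only [α, dif_neg hq]
  have hα2 : ∀ p ∈ sphere (0 : EuclideanSpace ℝ (Fin (j + 1))) 1, α p ∈ bd D := by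
    intro p hp
    obtain ⟨_, i, hi⟩ := (he2 (e.symm p)).2 (by simpa using hp)
    refine (mem_bd_iff D _).2 ⟨hα1 p (sphere_subset_closedBall hp), (ι.symm i).1, (ι.symm i).2, ?_⟩
    simpa only [α, dif_pos (ι.symm i).2, Subtype.coe_eta, Equiv.apply_symm_apply] using hi
  have hβ1 : ∀ t ∈ cell D, β t ∈ closedBall (0 : EuclideanSpace ℝ (Fin (j + 1))) 1 := by
    intro t ht
    exact (he1 _).1 fun i => (ht _).1 (ι.symm i).2
  have hβ2 : ∀ t ∈ bd D, β t ∈ sphere (0 : EuclideanSpace ℝ (Fin (j + 1))) 1 := by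
    intro t ht
    obtain ⟨q, hq, hq2⟩ := ((mem_bd_iff D t).1 ht).2
    exact (he2 _).1 ⟨fun i => (ht.1 _).1 (ι.symm i).2, ι ⟨q, hq⟩, by simpa using hq2⟩
  obtain ⟨H, hH1, hH2, hH3⟩ := h z (fun p => u (α p.1))
    (hu.comp_continuous (hα.comp continuous_subtype_val) (fun p => hα2 p.1 p.2))
    (fun p => ⟨(hub _ (hα2 p.1 p.2)).2, (hub _ (hα2 p.1 p.2)).1⟩)
  classical
  refine ⟨fun t => if ht : t ∈ cell D then H ⟨β t, hβ1 t ht⟩ else z, ?_, ?_, ?_⟩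
  · rw [continuousOn_iff_continuous_domRestrict]
    have : Continuous (fun t : cell D => H ⟨β t.1, hβ1 t.1 t.2⟩) := by
      refine hH1.comp ?_
      exact Continuous.subtype_mk (hβ.comp continuous_subtype_val) _
    convert this using 2 with t
    simp
  · intro t ht
    simp only [dif_pos ht.1]
    have := hH3 ⟨β t, hβ2 t ht⟩
    simp only at this
    rw [this, hαβ t ht.1]
  · intro t ht
    simp only [dif_pos ht]
    exact ⟨(hH2 _).2, (hH2 _).1⟩

lemma fill_zero {n : ℕ} {E : Type*} [PseudoMetricSpace E] {S K : Set E} {r r' : ℝ}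
    (h : ∀ z ∈ K, ∃ s ∈ S, dist s z < r') : Fill n S K r r' 0 := by
  intro D hD u _ z hz _
  obtain ⟨s, hs, hsz⟩ := h z hz
  refine ⟨fun _ => s, continuousOn_const, fun t ht => ?_, fun _ _ => ⟨hs, hsz⟩⟩
  have := ht.2
  omega

end Emb
namespace Emb

lemma dir_sub_le {V : Type*} [NormedAddCommGroup V] [NormedSpace ℝ V] {a v : V} (ha : a ≠ 0)
    (hv : v ≠ 0) : ‖‖a‖⁻¹ • a - ‖v‖⁻¹ • v‖ ≤ 2 * ‖a - v‖ / ‖v‖ := by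
  have ha' : 0 < ‖a‖ := norm_pos_iff.2 ha
  have hv' : 0 < ‖v‖ := norm_pos_iff.2 hv
  have h1 : ‖a‖⁻¹ • a - ‖v‖⁻¹ • v = ‖v‖⁻¹ • (a - v) + (‖a‖⁻¹ - ‖v‖⁻¹) • a := by module
  have h2 : ‖(‖a‖⁻¹ - ‖v‖⁻¹) • a‖ = |‖v‖ - ‖a‖| / ‖v‖ := by
    rw [norm_smul, Real.norm_eq_abs]
    have : ‖a‖⁻¹ - ‖v‖⁻¹ = (‖v‖ - ‖a‖) / (‖a‖ * ‖v‖) := by field_simp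
    rw [this, abs_div, abs_of_pos (mul_pos ha' hv')]
    field_simp
  have h3 : ‖‖v‖⁻¹ • (a - v)‖ = ‖a - v‖ / ‖v‖ := by
    rw [norm_smul, norm_inv, norm_norm]; field_simp
  have h4 : |‖v‖ - ‖a‖| ≤ ‖a - v‖ := by
    rw [norm_sub_rev]; exact abs_norm_sub_norm_le v a
  calc _ ≤ ‖a - v‖ / ‖v‖ + |‖v‖ - ‖a‖| / ‖v‖ := by
        rw [h1, ← h2, ← h3]; exact norm_add_le _ _
    _ ≤ ‖a - v‖ / ‖v‖ + ‖a - v‖ / ‖v‖ := by gcongr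
    _ = _ := by ring

variable {V E : Type*} [NormedAddCommGroup V] [NormedSpace ℝ V]
  [NormedAddCommGroup E] [NormedSpace ℝ E]

lemma dir_mem {x : V} (hx : x ≠ 0) : ‖x‖⁻¹ • x ∈ sphere (0 : V) 1 := by
  rw [mem_sphere_zero_iff_norm, norm_smul, norm_inv, norm_norm]
  exact inv_mul_cancel₀ (norm_ne_zero_iff.2 hx)

open Classical in
/-- radial extension of a map of the sphere. -/
noncomputable def rad (g : sphere (0 : V) 1 → E) (x : V) : E :=
  if h : x ≠ 0 then g ⟨‖x‖⁻¹ • x, dir_mem h⟩ else 0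

lemma rad_of_ne (g : sphere (0 : V) 1 → E) {x : V} (h : x ≠ 0) :
    rad g x = g ⟨‖x‖⁻¹ • x, dir_mem h⟩ := by simp only [rad, dif_pos h]

lemma rad_smul (g : sphere (0 : V) 1 → E) (p : sphere (0 : V) 1) {c : ℝ} (hc : 0 < c) :
    rad g (c • p.1) = g p := by
  have hp : ‖p.1‖ = 1 := mem_sphere_zero_iff_norm.1 p.2
  have h0 : p.1 ≠ 0 := by intro h; rw [h] at hp; simp at hp
  rw [rad_of_ne g (smul_ne_zero hc.ne' h0)]
  congr 1
  ext1
  simp only [norm_smul, hp, Real.norm_eq_abs, abs_of_pos hc, mul_one, smul_smul]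
  rw [inv_mul_cancel₀ hc.ne', one_smul]

lemma rad_continuousOn {g : sphere (0 : V) 1 → E} (hg : Continuous g) :
    ContinuousOn (rad g) {x | x ≠ 0} := by
  rw [continuousOn_iff_continuous_domRestrict]
  have : Continuous (fun x : {x : V | x ≠ 0} => g ⟨‖x.1‖⁻¹ • x.1, dir_mem x.2⟩) := by
    refine hg.comp (Continuous.subtype_mk ?_ _)
    refine Continuous.smul (Continuous.inv₀ (by fun_prop) fun x => norm_ne_zero_iff.2 x.2)
      continuous_subtype_val
  convert this using 2 with x
  exact rad_of_ne g x.2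

lemma exists_approx (k : ℕ) {S : Set E} {ν : ℝ}
    (g : sphere (0 : EuclideanSpace ℝ (Fin (k + 1))) 1 → E) (hg : Continuous g)
    (hst : State (k + 1) S (range g) ν (k + 1)) :
    ∃ f : sphere (0 : EuclideanSpace ℝ (Fin (k + 1))) 1 → E, Continuous f ∧
      ∀ p, f p ∈ S ∧ dist (f p) (g p) < ν := by
  obtain ⟨ρ, hρ, 𝓕, -, hst⟩ := hst
  have huc : UniformContinuous g := CompactSpace.uniformContinuous_of_continuous hg
  obtain ⟨τ, hτ, huc⟩ := Metric.uniformContinuous_iff.1 huc ρ hρ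
  let Λ : (Fin (k + 1) → ℝ) →L[ℝ] EuclideanSpace ℝ (Fin (k + 1)) :=
    (EuclideanSpace.equiv (Fin (k + 1)) ℝ).symm
  have hΛ : ∀ x j, (Λ x) j = x j := fun x j => rfl
  have hΛle : ∀ x j, |x j| ≤ ‖Λ x‖ := fun x j => by
    have := PiLp.norm_apply_le (Λ x) j
    rwa [hΛ, Real.norm_eq_abs] at this
  obtain ⟨M, hM⟩ := exists_nat_gt (max 1 (2 * ‖Λ‖ / τ))
  have hM1 : (1 : ℝ) < M := (le_max_left _ _).trans_lt hM
  have hM2 : 2 * ‖Λ‖ / τ < M := (le_max_right _ _).trans_lt hM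
  have hM2' : 2 * ‖Λ‖ / M < τ := by
    rw [div_lt_iff₀ hτ] at hM2
    rw [div_lt_iff₀ (by linarith)]; linarith
  -- closeness of directions
  have hclose : ∀ x y : Fin (k + 1) → ℝ, Λ x ≠ 0 → (∃ j, (M : ℝ) ≤ |y j|) → ‖x - y‖ ≤ 1 →
      dist (rad g (Λ x)) (rad g (Λ y)) < ρ := by
    rintro x y hx ⟨j, hj⟩ hxy
    have hy' : (M : ℝ) ≤ ‖Λ y‖ := hj.trans (hΛle y j)
    have hy : Λ y ≠ 0 := by
      rw [← norm_pos_iff]; linarith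
    rw [rad_of_ne g hx, rad_of_ne g hy]
    apply huc
    rw [Subtype.dist_eq, dist_eq_norm]
    refine (dir_sub_le hx hy).trans_lt (lt_of_le_of_lt ?_ hM2')
    have h1 : ‖Λ x - Λ y‖ ≤ ‖Λ‖ := by
      rw [← map_sub]
      exact (Λ.le_opNorm _).trans (mul_le_of_le_one_right (norm_nonneg _) hxy)
    gcongr
  let γ : (Fin (k + 1) → ℤ) → E := fun v => rad g (Λ (zc v))
  let L : ℕ → Set (Fin (k + 1) → ℤ) := fun m => {v | ∃ j, (M : ℤ) + m ≤ |v j|}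
  have hL : ∀ m, ∀ v ∈ L m, ∃ j, (M : ℝ) ≤ |zc v j| := by
    rintro m v ⟨j, hj⟩
    refine ⟨j, ?_⟩
    have : (M : ℤ) ≤ |v j| := by omega
    simp only [zc]
    exact_mod_cast this
  have hL0 : ∀ m, ∀ v ∈ L m, Λ (zc v) ≠ 0 := by
    intro m v hv
    obtain ⟨j, hj⟩ := hL m v hv
    rw [← norm_pos_iff]
    linarith [hΛle (zc v) j]
  obtain ⟨f, -, hf⟩ := hst γ L
    (fun m v hv => by
      simp only [γ]; rw [rad_of_ne g (hL0 m v hv)]; exact mem_range_self _)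
    (by
      intro m v hv a ha
      have hab : ∀ j, 0 ≤ a j - v j ∧ a j - v j ≤ 1 := fun j => by
        have h1 : v j ≤ a j := ha.1 j
        have h2 := ha.2 j
        simp only [Pi.add_apply, Pi.one_apply] at h2
        omega
      have haL : a ∈ L m := by
        obtain ⟨j, hj⟩ := hv
        refine ⟨j, ?_⟩
        have := hab j
        push_cast at hj
        rw [le_abs] at hj ⊢
        omega
      refine ⟨haL, hclose _ _ (hL0 m a haL) (hL _ v hv) ?_⟩
      rw [pi_norm_le_iff_of_nonneg zero_le_one]
      intro j
      simp only [Pi.sub_apply, zc, Real.norm_eq_abs]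
      have h1 : |a j - v j| ≤ 1 := by rw [abs_le]; have := hab j; omega
      exact_mod_cast h1)
  set N : ℕ := M + (k + 1) with hN
  have hNpos : (0 : ℝ) < N := by rw [hN]; push_cast; positivity
  let W : Set (Fin (k + 1) → ℝ) := {x | ‖x‖ = N}
  have hWj : ∀ x ∈ W, ∃ j, |x j| = N := by
    intro x hx
    obtain ⟨j, hj⟩ := Finite.exists_max (fun j => ‖x j‖)
    refine ⟨j, le_antisymm ?_ ?_⟩
    · have := norm_le_pi_norm x j
      rw [show ‖x‖ = N from hx] at this; exact this
    · rw [← show ‖x‖ = N from hx, ← Real.norm_eq_abs]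
      exact (pi_norm_le_iff_of_nonneg (norm_nonneg _)).2 hj
  have hWc : ∀ x ∈ W, fl x ∈ Icc (fun _ => -(N : ℤ)) (fun _ => (N : ℤ)) ∩ L (k + 1) ∧
      (nd x).card < k + 1 := by
    intro x hx
    obtain ⟨j, hj⟩ := hWj x hx
    have hxj : x j = ((N : ℤ) : ℝ) ∨ x j = ((-(N : ℤ) : ℤ) : ℝ) := by
      push_cast
      rcases abs_eq hNpos.le |>.1 hj with h | h
      · exact Or.inl h
      · exact Or.inr h
    have hb : ∀ i, -(N : ℝ) ≤ x i ∧ x i ≤ N := fun i => by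
      have := norm_le_pi_norm x i
      rw [show ‖x‖ = N from hx, Real.norm_eq_abs] at this
      exact abs_le.1 this
    refine ⟨⟨⟨fun i => ?_, fun i => ?_⟩, j, ?_⟩, ?_⟩
    · exact Int.le_floor.2 (by push_cast; exact (hb i).1)
    · have := (Int.floor_le (x i)).trans (hb i).2
      simp only [fl]
      exact_mod_cast this
    · rcases hxj with h | h
      · simp only [fl, h, Int.floor_intCast, hN]; push_cast
        exact le_abs_self _
      · simp only [fl, h, Int.floor_intCast, hN, abs_neg]; push_cast
        exact le_abs_self _
    · have : nd x ⊂ Finset.univ := by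
        refine Finset.ssubset_univ_iff.2 fun h => ?_
        have h2 : j ∈ nd x := h ▸ Finset.mem_univ j
        simp only [nd, Finset.mem_filter, Finset.mem_univ, true_and] at h2
        rcases hxj with h | h <;> rw [h] at h2 <;> exact h2 (Int.fract_intCast _)
      simpa using Finset.card_lt_card this
  have hfc : ContinuousOn f W :=
    continuousOn_of_cells f W _ ((finite_Icc _ _).inter_of_left _) (k + 1)
      (fun v hv D hD => (hf v hv.2 D hD).1) hWc
  -- radial projection to the boundary of the cube
  let X : sphere (0 : EuclideanSpace ℝ (Fin (k + 1))) 1 → (Fin (k + 1) → ℝ) :=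
    fun p => (N / ‖WithLp.ofLp p.1‖) • WithLp.ofLp p.1
  have hp0 : ∀ p : sphere (0 : EuclideanSpace ℝ (Fin (k + 1))) 1, 0 < ‖WithLp.ofLp p.1‖ := by
    intro p
    rw [norm_pos_iff]
    intro h
    have h1 : p.1 = 0 := by ext j; exact congrFun h j
    have h2 : ‖p.1‖ = 1 := mem_sphere_zero_iff_norm.1 p.2
    rw [h1] at h2; simp at h2
  have hXc : Continuous X := by
    refine Continuous.smul (Continuous.div continuous_const (by fun_prop) fun p => (hp0 p).ne')
      (by fun_prop)
  have hXW : ∀ p, X p ∈ W := by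
    intro p
    change ‖(N / ‖WithLp.ofLp p.1‖) • WithLp.ofLp p.1‖ = N
    rw [norm_smul, norm_div, norm_norm, Real.norm_of_nonneg hNpos.le]
    exact div_mul_cancel₀ _ (hp0 p).ne'
  have hXg : ∀ p, rad g (Λ (X p)) = g p := by
    intro p
    have : Λ (X p) = (N / ‖WithLp.ofLp p.1‖) • p.1 := by
      ext j; rfl
    rw [this]
    exact rad_smul g p (div_pos hNpos (hp0 p))
  refine ⟨fun p => f (X p), hfc.comp_continuous hXc hXW, fun p => ?_⟩
  obtain ⟨⟨-, h1⟩, h2⟩ := hWc _ (hXW p)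
  have h3 := (hf _ h1 _ h2).2 (fr (X p)) (fr_mem_cell _)
  rw [fl_fr] at h3
  refine ⟨h3.1, ?_⟩
  have h4 : dist (rad g (Λ (X p))) (γ (fl (X p))) < ρ := by
    refine hclose _ _ ?_ (hL _ _ h1) ?_
    · obtain ⟨j, hj⟩ := hWj _ (hXW p)
      rw [← norm_pos_iff]
      linarith [hΛle (X p) j]
    · have : X p - zc (fl (X p)) = fr (X p) := by rw [sub_eq_iff_eq_add', fl_fr]
      rw [this, pi_norm_le_iff_of_nonneg zero_le_one]
      intro j
      simp only [fr, Real.norm_eq_abs, Int.abs_fract]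
      exact (Int.fract_lt_one _).le
  rw [hXg] at h4
  have h5 := dist_triangle_right (f (X p)) (g p) (γ (fl (X p)))
  linarith [h3.2]

/-- gluing a filling of `f` with the linear homotopy from `f` to `g`. -/
lemma glue {f g : sphere (0 : V) 1 → E} (hf : Continuous f) (hg : Continuous g) {B : Set E}
    (h : closedBall (0 : V) 1 → E) (hh : Continuous h) (hB : ∀ p, h p ∈ B)
    (hhf : ∀ p : sphere (0 : V) 1, h ⟨p.1, sphere_subset_closedBall p.2⟩ = f p)
    (hseg : ∀ p, segment ℝ (f p) (g p) ⊆ B) :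
    ∃ h' : closedBall (0 : V) 1 → E, Continuous h' ∧ (∀ p, h' p ∈ B) ∧
      ∀ p : sphere (0 : V) 1, h' ⟨p.1, sphere_subset_closedBall p.2⟩ = g p := by
  classical
  let h₁ : V → E := fun x => if hx : x ∈ closedBall (0 : V) 1 then h ⟨x, hx⟩ else 0
  have h₁c : ContinuousOn h₁ (closedBall 0 1) := by
    rw [continuousOn_iff_continuous_domRestrict]
    convert hh using 1
    ext x
    simp only [Set.domRestrict_apply, h₁, dif_pos x.2]
  let F : V → E := fun x => if ‖x‖ ≤ 1 / 2 then h₁ ((2 : ℝ) • x) else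
    (2 - 2 * ‖x‖) • rad f x + (2 * ‖x‖ - 1) • rad g x
  have hne : ∀ x : V, 1 / 2 ≤ ‖x‖ → x ≠ 0 := by
    intro x hx; rw [← norm_pos_iff]; linarith
  have hF : Continuous F := by
    refine continuous_if_le (by fun_prop) continuous_const ?_ ?_ ?_
    · refine h₁c.comp (by fun_prop) ?_
      intro x (hx : ‖x‖ ≤ 1 / 2)
      rw [mem_closedBall_zero_iff, norm_smul]
      norm_num; linarith
    · have a := (rad_continuousOn hf).mono (show {x : V | 1 / 2 ≤ ‖x‖} ⊆ {x | x ≠ 0} from hne)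
      have b := (rad_continuousOn hg).mono (show {x : V | 1 / 2 ≤ ‖x‖} ⊆ {x | x ≠ 0} from hne)
      exact (ContinuousOn.smul (by fun_prop) a).add (ContinuousOn.smul (by fun_prop) b)
    · intro x hx
      have hx0 := hne x hx.ge
      have hn : ‖(2 : ℝ) • x‖ = 1 := by rw [norm_smul, hx]; norm_num
      have h2 : (2 : ℝ) • x ∈ sphere (0 : V) 1 := mem_sphere_zero_iff_norm.2 hn
      have h3 := rad_smul f ⟨_, h2⟩ (c := 1 / 2) (by norm_num)
      rw [smul_smul] at h3
      norm_num at h3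
      have h4 := hhf ⟨_, h2⟩
      simp only [h₁, dif_pos (sphere_subset_closedBall h2), h4, hx, h3]
      norm_num
  refine ⟨fun x => F x.1, hF.comp continuous_subtype_val, ?_, ?_⟩
  · rintro ⟨x, hx⟩
    have hx' : ‖x‖ ≤ 1 := mem_closedBall_zero_iff.1 hx
    by_cases h2 : ‖x‖ ≤ 1 / 2
    · have h3 : (2 : ℝ) • x ∈ closedBall (0 : V) 1 := by
        rw [mem_closedBall_zero_iff, norm_smul]
        norm_num; linarith
      simp only [F, if_pos h2, h₁, dif_pos h3]
      exact hB _
    · have hx0 := hne x (not_le.1 h2).le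
      simp only [F, if_neg h2]
      rw [rad_of_ne f hx0, rad_of_ne g hx0]
      refine hseg _ ⟨2 - 2 * ‖x‖, 2 * ‖x‖ - 1, by linarith, by linarith [not_le.1 h2], by ring, rfl⟩
  · intro p
    have hp : ‖p.1‖ = 1 := mem_sphere_zero_iff_norm.1 p.2
    have h3 := rad_smul g p (c := 1) one_pos
    rw [one_smul] at h3
    simp only [F, hp, h3]
    norm_num

end Emb

/-- Corollary 4.5, with η(ε) = δ(ε)/2 and λ(ε,μ) = δ_k(min{η(ε), μ}). -/
theorem embed_of_balls_and_neighbourhoods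
    {E : Type*} [NormedAddCommGroup E] [NormedSpace ℝ E]
    (k : ℕ) (δ : ℝ → ℝ) (hδpos : ∀ ε > 0, 0 < δ ε)
    (S T : Set E) (hS : S.Nonempty) (hST : S ⊆ T)
    (hT : ∀ y : E, ∀ ε > (0 : ℝ), EmbedK k (ball y (δ ε) ∩ T) (ball y ε ∩ T))
    (hLC : ∀ y : E, ∀ ε > (0 : ℝ), ∀ i < k, EmbedK i (ball y (δ ε) ∩ S) (ball y ε ∩ S)) :
    ∀ y : E, ∀ ε > (0 : ℝ), ∀ μ > (0 : ℝ),
      EmbedK k (ball y (δ ε / 2) ∩ ONbhd (δ^[k] (min (δ ε / 2) μ)) S)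
        (ball y ε ∩ ONbhd μ T) := by
  intro y ε hε μ hμ
  rcases subsingleton_or_nontrivial E with hE | hE
  · intro g _ _
    obtain ⟨s, hs⟩ := hS
    refine ⟨fun _ => y, continuous_const, fun _ => ⟨mem_ball_self hε, ?_⟩,
      fun _ => Subsingleton.elim _ _⟩
    refine mem_iUnion₂.2 ⟨s, hST hs, ?_⟩
    rw [Subsingleton.elim y s]
    exact mem_ball_self hμ
  have hδle : ∀ ε > 0, δ ε ≤ ε := by
    intro ε hε
    by_contra hcon
    push Not at hcon
    obtain ⟨s, hs⟩ := hS
    obtain ⟨w, hw⟩ := exists_norm_eq E hε.le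
    have hd : dist s (s + w) = ε := by rw [dist_self_add_right, hw]
    obtain ⟨h, -, h1, h2⟩ := hT (s + w) ε hε (fun _ => s) continuous_const
      (fun _ => ⟨by rw [mem_ball, hd]; exact hcon, hST hs⟩)
    have hp : (EuclideanSpace.single 0 1 : EuclideanSpace ℝ (Fin (k + 1))) ∈
        sphere (0 : EuclideanSpace ℝ (Fin (k + 1))) 1 := by simp
    have h3 := (h1 ⟨_, sphere_subset_closedBall hp⟩).1
    rw [h2 ⟨_, hp⟩, mem_ball, hd] at h3
    exact lt_irrefl _ h3
  intro g hg hgm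
  set ν := min (δ ε / 2) μ with hν
  have hνpos : 0 < ν := lt_min (half_pos (hδpos ε hε)) hμ
  have hpos : ∀ m, 0 < δ^[m] ν := by
    intro m
    induction m with
    | zero => exact hνpos
    | succ m ih => rw [Function.iterate_succ_apply']; exact hδpos _ ih
  have hstate : Emb.State (k + 1) S (range g) (δ^[k - (k + 1 - 1)] ν) (k + 1) := by
    refine Emb.state_all (isCompact_range hg) (fun i => δ^[k - (i - 1)] ν) (k + 1) ?_ ?_
    · intro i hi
      rcases i with _ | i
      · exact le_rfl
      · have : k - (i + 1 - 1) = (k - (i + 1 + 1 - 1)) + 1 := by omega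
        rw [this, Function.iterate_succ_apply']
        exact hδle _ (hpos _)
    · intro i hi
      rcases i with _ | i
      · refine Emb.fill_zero ?_
        rintro _ ⟨p, rfl⟩
        obtain ⟨s, hs, hsp⟩ := mem_iUnion₂.1 (hgm p).2
        refine ⟨s, hs, ?_⟩
        rw [dist_comm]
        exact hsp
      · have : k - (i + 1 - 1) = (k - (i + 1 + 1 - 1)) + 1 := by omega
        rw [this, Function.iterate_succ_apply']
        exact Emb.fill_of_embed fun z => hLC z _ (hpos _) i (by omega)
  have hk0 : k - (k + 1 - 1) = 0 := by omega
  rw [hk0, Function.iterate_zero, id] at hstate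
  obtain ⟨f, hf, hfp⟩ := Emb.exists_approx k g hg hstate
  have hfball : ∀ p, f p ∈ ball y (δ ε) := by
    intro p
    have h1 := (hfp p).2
    have h2 : dist (g p) y < δ ε / 2 := (hgm p).1
    have h3 : ν ≤ δ ε / 2 := min_le_left _ _
    rw [mem_ball]
    linarith [dist_triangle (f p) (g p) y]
  obtain ⟨h, hh, hhB, hhf⟩ := hT y ε hε f hf (fun p => ⟨hfball p, hST (hfp p).1⟩)
  refine Emb.glue hf hg h hh (fun p => ⟨(hhB p).1, ?_⟩) hhf ?_
  · exact mem_iUnion₂.2 ⟨h p, (hhB p).2, mem_ball_self hμ⟩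
  · intro p x hx
    constructor
    · refine (convex_ball y ε).segment_subset ?_ ?_ hx
      · exact ball_subset_ball (hδle ε hε) (hfball p)
      · refine ball_subset_ball ?_ (hgm p).1
        linarith [hδle ε hε, hδpos ε hε]
    · refine mem_iUnion₂.2 ⟨f p, hST (hfp p).1, ?_⟩
      refine (convex_ball (f p) μ).segment_subset (mem_ball_self hμ) ?_ hx
      rw [mem_ball, dist_comm]
      exact (hfp p).2.trans_le (min_le_right _ _)
end
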